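/- arXiv:math/0508421 — 3 statements merged into one kernel-verified Lean document; each statement's English description precedes it below -/
import Mathlib

section
/- Let F be a binary quintic over ℂ. Each of the six expressions B₀(F),…,B₅(F) is a homogeneous polynomial invariant of F of degree 24 and weight 60: B_i is a polynomial of degree 24 in the coefficients a₀,…,a₅ of F, and B_i(gF) = (det g)^{−60} B_i(F) for every g ∈ GL₂(ℂ); in particular B_i(gF) = B_i(F) for all g ∈ SL₂(ℂ). -/
/-!
The proof passes to the roots. The quartic invariants `S`, `T` are polynomials in the products
`(12)(34)`, `(13)(42)`, `(14)(23)` of brackets of the four roots (`Sq_quarticOf`, `Tq_quarticOf`).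
Brackets are multiplied by `(det g)⁻¹` under the action of `g`, and by `uⱼuₖ` when the roots are
rescaled by `u`. Counting factors gives the weight `60`, and degree `24` in each root (`Binv_scale`).

For polynomiality in the coefficients, put `λⱼ = (rⱼ, 1)`. Then `Bᵢ` is a symmetric polynomial in
`r₁,…,r₅` of degree at most `24` in `r₁`, so it equals `q(e₁,…,e₅)` for some polynomial `q`. The
total degree of `q` is at most `24`, because the lexicographically leading monomial of `e^t` has
degree `|t|` in `r₁` and leading monomials of different `e^t` differ (`degree_le_of_esymm`).
Homogenizing `q` with `a₀` yields a form `P` of degree `24` with `Bᵢ = P(a₀,…,a₅)` whenever all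
roots are finite, and by density and continuity for all roots (`Binv_eq_eval`). Invariance of `P`
then follows from that of `Bᵢ`, since `g` maps a quintic given by roots to one given by the
transformed roots.
-/

noncomputable section

open MvPolynomial

abbrev P2 := MvPolynomial (Fin 2) ℂ

/-- The bracket `(bc) = b₁c₂ − b₂c₁` of two points of `ℂ²`. -/
def br (b c : Fin 2 → ℂ) : ℂ := b 0 * c 1 - b 1 * c 0

/-- The linear binary form `(xλ) = x₁λ₂ − x₂λ₁` with homogeneous root `λ`. -/
def lin (l : Fin 2 → ℂ) : P2 := C (l 1) * X 0 - C (l 0) * X 1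

/-- The binary quintic with homogeneous roots `λ₁,…,λ₅`. -/
def quinticOf (l : Fin 5 → Fin 2 → ℂ) : P2 := ∏ i, lin (l i)

/-- The binary quartic obtained from the quintic with roots `λ₁,…,λ₅` by
omitting the `i`-th factor. -/
def quarticOmit (l : Fin 5 → Fin 2 → ℂ) (i : Fin 5) : P2 :=
  ∏ j ∈ Finset.univ.erase i, lin (l j)

/-- The binary quartic with homogeneous roots `ξ₁,…,ξ₄`. -/
def quarticOf (l : Fin 4 → Fin 2 → ℂ) : P2 := ∏ i, lin (l i)

/-- The coefficient of `x₁^i x₂^j` in a binary form. -/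
def mcoeff (i j : ℕ) (F : P2) : ℂ :=
  MvPolynomial.coeff (Finsupp.single 0 i + Finsupp.single 1 j) F

/-- The invariant `S = q₀q₄ − 4q₁q₃ + 3q₂²` of a binary quartic
`Q = q₀x₁⁴ + 4q₁x₁³x₂ + 6q₂x₁²x₂² + 4q₃x₁x₂³ + q₄x₂⁴`. -/
def Sq (Q : P2) : ℂ :=
  mcoeff 4 0 Q * mcoeff 0 4 Q - 4 * (mcoeff 3 1 Q / 4) * (mcoeff 1 3 Q / 4)
    + 3 * (mcoeff 2 2 Q / 6) ^ 2

/-- The invariant `T = q₀q₂q₄ + 2q₁q₂q₃ − q₂³ − q₀q₃² − q₁²q₄` of a binary quartic. -/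
def Tq (Q : P2) : ℂ :=
  mcoeff 4 0 Q * (mcoeff 2 2 Q / 6) * mcoeff 0 4 Q
    + 2 * (mcoeff 3 1 Q / 4) * (mcoeff 2 2 Q / 6) * (mcoeff 1 3 Q / 4)
    - (mcoeff 2 2 Q / 6) ^ 3 - mcoeff 4 0 Q * (mcoeff 1 3 Q / 4) ^ 2
    - (mcoeff 3 1 Q / 4) ^ 2 * mcoeff 0 4 Q

/-- The quintic `R̄ = ∏ᵢ ((S(Qᵢ)³ − 27T(Qᵢ)²)z − S(Qᵢ)³)` in the variable `z`. -/
def Rbar (l : Fin 5 → Fin 2 → ℂ) : Polynomial ℂ :=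
  ∏ i : Fin 5,
    (Polynomial.C (Sq (quarticOmit l i) ^ 3 - 27 * Tq (quarticOmit l i) ^ 2) * Polynomial.X
      - Polynomial.C (Sq (quarticOmit l i) ^ 3))

/-- The invariant `Bᵢ`, defined by `R̄ = Σᵢ Bᵢ z^(5−i)`. -/
def Binv (l : Fin 5 → Fin 2 → ℂ) (i : ℕ) : ℂ := (Rbar l).coeff (5 - i)

/-- Partial derivative of a binary form. -/
def pd (i : Fin 2) (F : P2) : P2 := MvPolynomial.pderiv i F

/-- The `k`-th transvectant of binary forms `F`, `G` of orders `p`, `q`. -/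
def transv (p q k : ℕ) (F G : P2) : P2 :=
  C ((Nat.factorial (p - k) * Nat.factorial (q - k) : ℂ)
      / (Nat.factorial p * Nat.factorial q)) *
  ∑ i ∈ Finset.range (k + 1),
    C ((-1 : ℂ) ^ i * (Nat.choose k i : ℂ)) *
      ((pd 1)^[i] ((pd 0)^[k - i] F)) * ((pd 0)^[i] ((pd 1)^[k - i] G))

/-- The covariant `C₁ = (F,F)₄` of a binary quintic. -/
def cov1 (F : P2) : P2 := transv 5 5 4 F F
/-- The covariant `C₂ = (F,C₁)₂` of a binary quintic. -/
def cov2 (F : P2) : P2 := transv 5 2 2 F (cov1 F)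
/-- The covariant `C₃ = (C₂,C₂)₂` of a binary quintic. -/
def cov3 (F : P2) : P2 := transv 3 3 2 (cov2 F) (cov2 F)
/-- The covariant `C₄ = (C₂,C₁)₂` of a binary quintic. -/
def cov4 (F : P2) : P2 := transv 3 2 2 (cov2 F) (cov1 F)

/-- The degree `4` invariant `J = −½(C₁,C₁)₂` of a binary quintic. -/
def Jinv (F : P2) : ℂ := -(1/2) * constantCoeff (transv 2 2 2 (cov1 F) (cov1 F))
/-- The degree `8` invariant `K = ⅛(C₁,C₃)₂` of a binary quintic. -/
def Kinv (F : P2) : ℂ := (1/8) * constantCoeff (transv 2 2 2 (cov1 F) (cov3 F))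
/-- The degree `12` invariant `L = (1/96)(C₃,C₃)₂` of a binary quintic. -/
def Linv (F : P2) : ℂ := (1/96) * constantCoeff (transv 2 2 2 (cov3 F) (cov3 F))
/-- The degree `18` invariant `H = −(1/384)((C₄,C₃)₁,(C₁,C₄)₁)₁` of a binary quintic. -/
def Hinv (F : P2) : ℂ :=
  -(1/384) *
    constantCoeff (transv 1 1 1 (transv 1 2 1 (cov4 F) (cov3 F)) (transv 2 1 1 (cov1 F) (cov4 F)))

/-- The coefficients `a₀,…,a₅` of a binary quintic `F = Σ aᵢ x₁^(5−i) x₂^i`. -/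
def qcoeffs (F : P2) : Fin 6 → ℂ := fun i => mcoeff (5 - (i : ℕ)) (i : ℕ) F

/-- The binary quintic with coefficients `a₀,…,a₅`. -/
def formOf (a : Fin 6 → ℂ) : P2 := ∑ i : Fin 6, C (a i) * X 0 ^ (5 - (i : ℕ)) * X 1 ^ (i : ℕ)

/-- The `GL₂(ℂ)` action on binary forms, `(gF)(x) = F(g⁻¹x)`. -/
def act (g : Matrix.GeneralLinearGroup (Fin 2) ℂ) (F : P2) : P2 :=
  aeval (fun i => ∑ j,
    C (((g⁻¹ : Matrix.GeneralLinearGroup (Fin 2) ℂ) : Matrix (Fin 2) (Fin 2) ℂ) i j) * X j) F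

/-- The `SL₂(ℂ)` action on binary forms, `(gF)(x) = F(g⁻¹x)`. -/
def actSL (g : Matrix.SpecialLinearGroup (Fin 2) ℂ) (F : P2) : P2 :=
  aeval (fun i => ∑ j,
    C (((g⁻¹ : Matrix.SpecialLinearGroup (Fin 2) ℂ) : Matrix (Fin 2) (Fin 2) ℂ) i j) * X j) F

/-- `P` (a polynomial in the coefficients `a₀,…,a₅` of a binary quintic) is an
`SL₂(ℂ)`-invariant: `P(gF) = P(F)` for all `g ∈ SL₂(ℂ)`. -/
def IsInvariantPoly (P : MvPolynomial (Fin 6) ℂ) : Prop :=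
  ∀ (g : Matrix.SpecialLinearGroup (Fin 2) ℂ) (a : Fin 6 → ℂ),
    MvPolynomial.eval (qcoeffs (actSL g (formOf a))) P = MvPolynomial.eval a P

/-- The discriminant `∏_{i<j} (λᵢλⱼ)²` of a binary quintic with roots `λ₁,…,λ₅`. -/
def disc5 (l : Fin 5 → Fin 2 → ℂ) : ℂ := ∏ i, ∏ j ∈ Finset.Ioi i, br (l i) (l j) ^ 2

/-- The discriminant `∏_{i<j} (ξᵢξⱼ)²` of a binary quartic with roots `ξ₁,…,ξ₄`. -/
def disc4 (l : Fin 4 → Fin 2 → ℂ) : ℂ := ∏ i, ∏ j ∈ Finset.Ioi i, br (l i) (l j) ^ 2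

/-- The Sylvester canonical form `u x₁⁵ + v x₂⁵ − w (x₁+x₂)⁵`. -/
def sylvester (u v w : ℂ) : P2 := C u * X 0 ^ 5 + C v * X 1 ^ 5 - C w * (X 0 + X 1) ^ 5

/-- The submodule of `SL₂(ℂ)`-invariant polynomials in the coefficients of the
binary quintic. -/
def invariantSubmodule : Submodule ℂ (MvPolynomial (Fin 6) ℂ) :=
  ⨅ (g : Matrix.SpecialLinearGroup (Fin 2) ℂ), ⨅ (a : Fin 6 → ℂ),
    LinearMap.ker
      ((aeval (R := ℂ) (qcoeffs (actSL g (formOf a)))).toLinearMap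
        - (aeval (R := ℂ) a).toLinearMap)


/-! ### Quartic invariants in terms of brackets -/

lemma mcoeff_add (i j : ℕ) (F G : P2) : mcoeff i j (F + G) = mcoeff i j F + mcoeff i j G := by
  simp [mcoeff]

lemma mcoeff_C_mul (i j : ℕ) (c : ℂ) (F : P2) : mcoeff i j (C c * F) = c * mcoeff i j F := by
  simp [mcoeff]

lemma mcoeff_X_pow (i j a b : ℕ) :
    mcoeff i j (X 0 ^ a * X 1 ^ b : P2) = if a = i ∧ b = j then 1 else 0 := by
  have h : (X 0 ^ a * X 1 ^ b : P2)
      = monomial (Finsupp.single 0 a + Finsupp.single 1 b) 1 := by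
    rw [X_pow_eq_monomial, X_pow_eq_monomial, monomial_mul, one_mul]
  rw [mcoeff, h, coeff_monomial]
  refine if_congr ⟨fun e => ?_, fun e => by rw [e.1, e.2]⟩ rfl rfl
  have h0 := DFunLike.congr_fun e 0
  have h1 := DFunLike.congr_fun e 1
  simpa using And.intro h0 h1

lemma quarticOf_expand (m : Fin 4 → Fin 2 → ℂ) :
    quarticOf m =
      C (m 0 1 * m 1 1 * m 2 1 * m 3 1) * (X 0 ^ 4 * X 1 ^ 0)
      + C (-(m 0 0 * m 1 1 * m 2 1 * m 3 1 + m 0 1 * m 1 0 * m 2 1 * m 3 1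
          + m 0 1 * m 1 1 * m 2 0 * m 3 1 + m 0 1 * m 1 1 * m 2 1 * m 3 0)) * (X 0 ^ 3 * X 1 ^ 1)
      + C (m 0 0 * m 1 0 * m 2 1 * m 3 1 + m 0 0 * m 1 1 * m 2 0 * m 3 1
          + m 0 0 * m 1 1 * m 2 1 * m 3 0 + m 0 1 * m 1 0 * m 2 0 * m 3 1
          + m 0 1 * m 1 0 * m 2 1 * m 3 0 + m 0 1 * m 1 1 * m 2 0 * m 3 0) * (X 0 ^ 2 * X 1 ^ 2)
      + C (-(m 0 1 * m 1 0 * m 2 0 * m 3 0 + m 0 0 * m 1 1 * m 2 0 * m 3 0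
          + m 0 0 * m 1 0 * m 2 1 * m 3 0 + m 0 0 * m 1 0 * m 2 0 * m 3 1)) * (X 0 ^ 1 * X 1 ^ 3)
      + C (m 0 0 * m 1 0 * m 2 0 * m 3 0) * (X 0 ^ 0 * X 1 ^ 4) := by
  simp only [quarticOf, lin, Fin.prod_univ_four, C_add, C_mul, C_neg]
  ring

/-- `S` as a function of the six brackets of the roots of a quartic. -/
lemma Sq_quarticOf (m : Fin 4 → Fin 2 → ℂ) :
    Sq (quarticOf m) = 1 / 24 * ((br (m 0) (m 1) * br (m 2) (m 3)) ^ 2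
      + (br (m 0) (m 2) * br (m 3) (m 1)) ^ 2 + (br (m 0) (m 3) * br (m 1) (m 2)) ^ 2) := by
  rw [quarticOf_expand]
  simp only [Sq, mcoeff_add, mcoeff_C_mul, mcoeff_X_pow, br]
  norm_num
  ring

/-- `T` as a function of the six brackets of the roots of a quartic. -/
lemma Tq_quarticOf (m : Fin 4 → Fin 2 → ℂ) :
    Tq (quarticOf m) = 1 / 432 *
      ((br (m 0) (m 1) * br (m 2) (m 3) - br (m 0) (m 2) * br (m 3) (m 1))
      * (br (m 0) (m 2) * br (m 3) (m 1) - br (m 0) (m 3) * br (m 1) (m 2))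
      * (br (m 0) (m 3) * br (m 1) (m 2) - br (m 0) (m 1) * br (m 2) (m 3))) := by
  rw [quarticOf_expand]
  simp only [Tq, mcoeff_add, mcoeff_C_mul, mcoeff_X_pow, br]
  norm_num
  ring

lemma quarticOmit_eq (l : Fin 5 → Fin 2 → ℂ) (i : Fin 5) :
    quarticOmit l i = quarticOf (fun k => l (i.succAbove k)) := by
  have h : (Finset.univ.erase i : Finset (Fin 5)) = Finset.univ.map i.succAboveEmb := by
    ext j
    simp [Fin.exists_succAbove_eq_iff]
  rw [quarticOmit, quarticOf, h, Finset.prod_map]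
  rfl

/-! ### Transformation behaviour of the `Bᵢ` -/

/-- If all brackets of the roots are rescaled by `uⱼ uₖ d`, then `Bᵢ` is rescaled by
`d⁶⁰ (∏ uⱼ)²⁴`. This covers both the change of the representatives of the roots (`d = 1`) and
linear substitutions (`u = 1`). -/
lemma Binv_scale (l l' : Fin 5 → Fin 2 → ℂ) (u : Fin 5 → ℂ) (d : ℂ)
    (h : ∀ j k, br (l' j) (l' k) = u j * u k * d * br (l j) (l k)) (n : ℕ) :
    Binv l' n = (d ^ 60 * (∏ j, u j) ^ 24) * Binv l n := by
  set c : Fin 5 → ℂ := fun i => d ^ 2 * ∏ k : Fin 4, u (i.succAbove k) with hc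
  have hS : ∀ i, Sq (quarticOmit l' i) = c i ^ 2 * Sq (quarticOmit l i) := by
    intro i
    simp only [quarticOmit_eq, Sq_quarticOf, h, hc, Fin.prod_univ_four]
    ring
  have hT : ∀ i, Tq (quarticOmit l' i) = c i ^ 3 * Tq (quarticOmit l i) := by
    intro i
    simp only [quarticOmit_eq, Tq_quarticOf, h, hc, Fin.prod_univ_four]
    ring
  have hcp : ∏ i, c i ^ 6 = d ^ 60 * (∏ j, u j) ^ 24 := by
    simp only [hc, Fin.prod_univ_five, Fin.prod_univ_four]
    simp [Fin.succAbove, Fin.lt_def]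
    ring
  have hR : Rbar l' = Polynomial.C (∏ i, c i ^ 6) * Rbar l := by
    rw [Rbar, Rbar, map_prod, ← Finset.prod_mul_distrib]
    refine Finset.prod_congr rfl fun i _ => ?_
    rw [hS, hT]
    simp only [Polynomial.C_sub, Polynomial.C_mul, Polynomial.C_pow]
    ring
  rw [Binv, Binv, hR, Polynomial.coeff_C_mul, hcp]

lemma Binv_perm (σ : Equiv.Perm (Fin 5)) (l : Fin 5 → Fin 2 → ℂ) (n : ℕ) :
    Binv (fun j => l (σ j)) n = Binv l n := by
  have hq : ∀ i, quarticOmit (fun j => l (σ j)) i = quarticOmit l (σ i) := by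
    intro i
    have h : (Finset.univ.erase (σ i) : Finset (Fin 5))
        = (Finset.univ.erase i).map σ.toEmbedding := by
      ext j
      simp
    rw [quarticOmit, quarticOmit, h, Finset.prod_map]
    rfl
  have hR : Rbar (fun j => l (σ j)) = Rbar l := by
    simp only [Rbar, hq]
    exact Equiv.prod_comp σ (fun i =>
      (Polynomial.C (Sq (quarticOmit l i) ^ 3 - 27 * Tq (quarticOmit l i) ^ 2) * Polynomial.X
      - Polynomial.C (Sq (quarticOmit l i) ^ 3)))
  rw [Binv, Binv, hR]

/-- The root `λ'` for which `(g⁻¹x λ) = (x λ')`, where `h = g⁻¹`. -/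
def rootAct (h : Matrix (Fin 2) (Fin 2) ℂ) (l : Fin 2 → ℂ) : Fin 2 → ℂ :=
  ![l 0 * h 1 1 - l 1 * h 0 1, l 1 * h 0 0 - l 0 * h 1 0]

lemma br_rootAct (h : Matrix (Fin 2) (Fin 2) ℂ) (b c : Fin 2 → ℂ) :
    br (rootAct h b) (rootAct h c) = h.det * br b c := by
  simp [br, rootAct, Matrix.det_fin_two]
  ring

lemma aeval_quinticOf (h : Matrix (Fin 2) (Fin 2) ℂ) (l : Fin 5 → Fin 2 → ℂ) :
    aeval (fun i => ∑ j, C (h i j) * X j : Fin 2 → P2) (quinticOf l)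
      = quinticOf (fun j => rootAct h (l j)) := by
  rw [quinticOf, quinticOf, map_prod]
  refine Finset.prod_congr rfl fun j _ => ?_
  simp [lin, rootAct, Fin.sum_univ_two, algebraMap_eq]
  ring

/-! ### Degrees in the fundamental theorem on symmetric polynomials -/

/-- The total degree of `q` in the elementary symmetric polynomials is at most the degree of
`q(e₁,…,eₙ)` in the first variable: the lexicographically leading monomial of `e^t` contains the
first variable to the power `|t|`, and distinct `t` have distinct leading monomials, so the
leading monomials do not all cancel. -/
lemma degree_le_of_esymm {n : ℕ} (q : MvPolynomial (Fin (n + 1)) ℂ) (t : Fin (n + 1) →₀ ℕ)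
    (ht : t ∈ q.support) :
    ∑ k, t k ≤ degreeOf 0 (esymmAlgHom (Fin (n + 1)) ℂ (n + 1) q).val := by
  set f : (Fin (n + 1) →₀ ℕ) → MvPolynomial (Fin (n + 1)) ℂ :=
    fun t => esymmAlgHomMonomial (Fin (n + 1)) t (coeff t q) with hf
  have hsum : (esymmAlgHom (Fin (n + 1)) ℂ (n + 1) q).val = ∑ t ∈ q.support, f t := by
    conv_lhs => rw [q.as_sum, map_sum (esymmAlgHom (Fin (n + 1)) ℂ (n + 1))]
    rw [← Subalgebra.coe_val, map_sum]
    rfl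
  have hdeg : ∀ s ∈ q.support, ⇑(ofLex (AddMonoidAlgebra.supDegree toLex (f s)))
      = Fin.accumulate (n + 1) (n + 1) s := fun s hs =>
    supDegree_esymmAlgHomMonomial (mem_support_iff.1 hs) s le_rfl
  obtain ⟨s, hs, hmax⟩ := q.support.exists_max_image
    (fun t => AddMonoidAlgebra.supDegree toLex (f t)) ⟨t, ht⟩
  have hlt : ∀ j ∈ q.support, j ≠ s →
      AddMonoidAlgebra.supDegree toLex (f j) < AddMonoidAlgebra.supDegree toLex (f s) := by
    intro j hj hjs
    refine lt_of_le_of_ne (hmax j hj) fun e => hjs ?_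
    refine DFunLike.ext' (Fin.accumulate_injective le_rfl ?_)
    rw [← hdeg j hj, ← hdeg s hs, e]
  have hlead := AddMonoidAlgebra.supDegree_leadingCoeff_sum_eq (D := toLex) hs hlt
  have hfs : f s ≠ 0 := by
    rw [← AddMonoidAlgebra.leadingCoeff_ne_zero toLex.injective]
    simp only [hf]
    rw [leadingCoeff_esymmAlgHomMonomial s le_rfl]
    exact mem_support_iff.1 hs
  have hb0 : (∑ t ∈ q.support, f t) ≠ 0 := by
    rw [← AddMonoidAlgebra.leadingCoeff_ne_zero toLex.injective, hlead.2,
      AddMonoidAlgebra.leadingCoeff_ne_zero toLex.injective]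
    exact hfs
  obtain ⟨a, ha, hae⟩ := AddMonoidAlgebra.exists_supDegree_mem_support (D := toLex) hb0
  have hacc : ∀ v : Fin (n + 1) →₀ ℕ, Fin.accumulate (n + 1) (n + 1) v 0 = ∑ k, v k := by
    intro v
    simp [Fin.accumulate_apply]
  have h1 : ∑ k, t k ≤ ∑ k, s k := by
    rw [← hacc, ← hacc, ← hdeg t ht, ← hdeg s hs]
    rcases (hmax t ht).eq_or_lt with e | ⟨j, hj, hlt'⟩
    · rw [e]
    · rcases (Fin.zero_le j).eq_or_lt with rfl | h
      · exact hlt'.le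
      · exact (hj 0 h).le
  have h2 : ∑ k, s k = a 0 := by
    rw [← hacc, ← hdeg s hs, ← hlead.1, hae]
    rfl
  rw [hsum]
  exact h1.trans (h2.le.trans (monomial_le_degreeOf 0 ha))

/-! ### The `Bᵢ` as symmetric polynomials in the affine roots -/

/-- `S(Qᵢ)` for the roots `λⱼ = (Xⱼ, 1)`. -/
def Spoly (i : Fin 5) : MvPolynomial (Fin 5) ℂ :=
  let x : Fin 4 → MvPolynomial (Fin 5) ℂ := fun k => X (i.succAbove k)
  C (1 / 24) * (((x 0 - x 1) * (x 2 - x 3)) ^ 2 + ((x 0 - x 2) * (x 3 - x 1)) ^ 2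
    + ((x 0 - x 3) * (x 1 - x 2)) ^ 2)

/-- `T(Qᵢ)` for the roots `λⱼ = (Xⱼ, 1)`. -/
def Tpoly (i : Fin 5) : MvPolynomial (Fin 5) ℂ :=
  let x : Fin 4 → MvPolynomial (Fin 5) ℂ := fun k => X (i.succAbove k)
  C (1 / 432) * (((x 0 - x 1) * (x 2 - x 3) - (x 0 - x 2) * (x 3 - x 1))
    * ((x 0 - x 2) * (x 3 - x 1) - (x 0 - x 3) * (x 1 - x 2))
    * ((x 0 - x 3) * (x 1 - x 2) - (x 0 - x 1) * (x 2 - x 3)))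

/-- `Bₙ` for the roots `λⱼ = (Xⱼ, 1)`. -/
def Bpoly (n : ℕ) : MvPolynomial (Fin 5) ℂ :=
  (∏ i : Fin 5, (Polynomial.C (Spoly i ^ 3 - C 27 * Tpoly i ^ 2) * Polynomial.X
      - Polynomial.C (Spoly i ^ 3))).coeff (5 - n)

lemma eval_Bpoly (r : Fin 5 → ℂ) (n : ℕ) :
    eval r (Bpoly n) = Binv (fun j => ![r j, 1]) n := by
  have hS : ∀ i, eval r (Spoly i) = Sq (quarticOmit (fun j => ![r j, 1]) i) := by
    intro i
    simp [Spoly, quarticOmit_eq, Sq_quarticOf, br]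
  have hT : ∀ i, eval r (Tpoly i) = Tq (quarticOmit (fun j => ![r j, 1]) i) := by
    intro i
    simp [Tpoly, quarticOmit_eq, Tq_quarticOf, br]
  rw [Bpoly, ← Polynomial.coeff_map, Polynomial.map_prod, Binv, Rbar]
  simp [hS, hT]

lemma Bpoly_isSymmetric (n : ℕ) : (Bpoly n).IsSymmetric := by
  intro σ
  refine MvPolynomial.funext fun r => ?_
  rw [eval_rename, eval_Bpoly, eval_Bpoly]
  exact Binv_perm σ (fun j => ![r j, 1]) n

lemma degreeOf_mul_le' {p q : MvPolynomial (Fin 5) ℂ} {a b : ℕ}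
    (hp : degreeOf 0 p ≤ a) (hq : degreeOf 0 q ≤ b) : degreeOf 0 (p * q) ≤ a + b :=
  (degreeOf_mul_le 0 p q).trans (add_le_add hp hq)

lemma degreeOf_add_le' {p q : MvPolynomial (Fin 5) ℂ} {a : ℕ}
    (hp : degreeOf 0 p ≤ a) (hq : degreeOf 0 q ≤ a) : degreeOf 0 (p + q) ≤ a :=
  (degreeOf_add_le 0 p q).trans (max_le hp hq)

lemma degreeOf_sub_le' {p q : MvPolynomial (Fin 5) ℂ} {a : ℕ}
    (hp : degreeOf 0 p ≤ a) (hq : degreeOf 0 q ≤ a) : degreeOf 0 (p - q) ≤ a :=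
  (degreeOf_sub_le 0 p q).trans (max_le hp hq)

lemma degreeOf_pow_le' {p : MvPolynomial (Fin 5) ℂ} {a : ℕ} (k : ℕ)
    (hp : degreeOf 0 p ≤ a) : degreeOf 0 (p ^ k) ≤ k * a :=
  (degreeOf_pow_le 0 p k).trans (Nat.mul_le_mul_left k hp)

lemma degreeOf_X_succAbove (i : Fin 5) (k : Fin 4) :
    degreeOf 0 (X (i.succAbove k) : MvPolynomial (Fin 5) ℂ)
      ≤ if i = 0 ∨ k ≠ 0 then 0 else 1 := by
  rw [degreeOf_X]
  fin_cases i <;> fin_cases k <;> simp [Fin.succAbove, Fin.lt_def, Fin.ext_iff]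

/-- The product has degree at most one in the first variable of `ℂ[X₀,…,X₄]`, which can only be
`X (i.succAbove 0)`, and degree zero if `i = 0`, when the first variable is the omitted one. -/
lemma degreeOf_bracket (i : Fin 5) (b c d : Fin 4) (hb : b ≠ 0) (hc : c ≠ 0) (hd : d ≠ 0) :
    degreeOf 0 ((X (i.succAbove 0) - X (i.succAbove b))
      * (X (i.succAbove c) - X (i.succAbove d)) : MvPolynomial (Fin 5) ℂ)
      ≤ if i = 0 then 0 else 1 := by
  have h0 : ∀ k : Fin 4, k ≠ 0 →
      degreeOf 0 (X (i.succAbove k) : MvPolynomial (Fin 5) ℂ) ≤ 0 := fun k hk => by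
    simpa [hk] using degreeOf_X_succAbove i k
  have h1 : degreeOf 0 (X (i.succAbove 0) : MvPolynomial (Fin 5) ℂ) ≤ if i = 0 then 0 else 1 := by
    simpa using degreeOf_X_succAbove i 0
  exact degreeOf_mul_le' (degreeOf_sub_le' h1 ((h0 b hb).trans (Nat.zero_le _)))
    (degreeOf_sub_le' (h0 c hc) (h0 d hd))

lemma degreeOf_Spoly (i : Fin 5) : degreeOf 0 (Spoly i) ≤ 2 * if i = 0 then 0 else 1 := by
  refine (degreeOf_C_mul_le _ _ _).trans ?_
  refine degreeOf_add_le' (degreeOf_add_le' ?_ ?_) ?_ <;>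
  exact degreeOf_pow_le' 2 (degreeOf_bracket i _ _ _ (by decide) (by decide) (by decide))

lemma degreeOf_Tpoly (i : Fin 5) : degreeOf 0 (Tpoly i) ≤ 3 * if i = 0 then 0 else 1 := by
  refine (degreeOf_C_mul_le _ _ _).trans ?_
  have h := fun b c d hb hc hd => degreeOf_bracket i b c d hb hc hd
  refine (degreeOf_mul_le' (degreeOf_mul_le'
    (degreeOf_sub_le' (h 1 2 3 ?_ ?_ ?_) (h 2 3 1 ?_ ?_ ?_))
    (degreeOf_sub_le' (h 2 3 1 ?_ ?_ ?_) (h 3 1 2 ?_ ?_ ?_)))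
    (degreeOf_sub_le' (h 3 1 2 ?_ ?_ ?_) (h 1 2 3 ?_ ?_ ?_))).trans (by omega)
  all_goals decide

lemma degreeOf_coeff_prod (s : Finset (Fin 5))
    (f : Fin 5 → Polynomial (MvPolynomial (Fin 5) ℂ)) (d : Fin 5 → ℕ)
    (h : ∀ i k, degreeOf 0 ((f i).coeff k) ≤ d i) (k : ℕ) :
    degreeOf 0 ((∏ i ∈ s, f i).coeff k) ≤ ∑ i ∈ s, d i := by
  induction s using Finset.induction_on generalizing k with
  | empty =>
    rw [Finset.prod_empty, Polynomial.coeff_one]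
    split_ifs <;> simp
  | insert a s ha ih =>
    rw [Finset.prod_insert ha, Finset.sum_insert ha, Polynomial.coeff_mul]
    refine (degreeOf_sum_le _ _ _).trans (Finset.sup_le fun x _ => ?_)
    exact degreeOf_mul_le' (h a _) (ih _)

lemma degreeOf_Bpoly (n : ℕ) : degreeOf 0 (Bpoly n) ≤ 24 := by
  have hS : ∀ i, degreeOf 0 (Spoly i ^ 3) ≤ if i = 0 then 0 else 6 := fun i =>
    (degreeOf_pow_le' 3 (degreeOf_Spoly i)).trans (by split_ifs <;> simp)
  have hT : ∀ i, degreeOf 0 (C 27 * Tpoly i ^ 2) ≤ if i = 0 then 0 else 6 := fun i =>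
    (degreeOf_C_mul_le _ _ _).trans
      ((degreeOf_pow_le' 2 (degreeOf_Tpoly i)).trans (by split_ifs <;> simp))
  refine (degreeOf_coeff_prod Finset.univ _ (fun i => if i = 0 then 0 else 6) ?_ _).trans ?_
  · intro i k
    rw [Polynomial.coeff_sub, Polynomial.coeff_C_mul, Polynomial.coeff_X, Polynomial.coeff_C]
    refine degreeOf_sub_le' ?_ ?_
    · by_cases h : 1 = k
      · rw [if_pos h, mul_one]
        exact degreeOf_sub_le' (hS i) (hT i)
      · simp [if_neg h]
    · by_cases h : k = 0
      · rw [if_pos h]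
        exact hS i
      · simp [if_neg h]
  · simp [Fin.sum_univ_five]

/-! ### Coefficients of a quintic and homogenization -/

lemma qcoeffs_affine (r : Fin 5 → ℂ) (k : Fin 6) :
    qcoeffs (quinticOf (fun j => ![r j, 1])) k = (-1) ^ (k : ℕ) * eval r (esymm (Fin 5) ℂ k) := by
  have hlin : ∀ j, lin ![r j, 1] = C (-r j) * X 1 + X 0 := fun j => by
    simp [lin]; ring
  have hq : quinticOf (fun j => ![r j, 1])
      = ∑ t ∈ (Finset.univ : Finset (Fin 5)).powerset,
          C (∏ j ∈ t, -r j) * (X 0 ^ (5 - t.card) * X 1 ^ t.card) := by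
    simp only [quinticOf, hlin]
    rw [Finset.prod_add]
    refine Finset.sum_congr rfl fun t ht => ?_
    rw [Finset.prod_mul_distrib, Finset.prod_const, Finset.prod_const,
      Finset.card_sdiff_of_subset (Finset.mem_powerset.1 ht), map_prod]
    simp
    ring
  have hs : qcoeffs (quinticOf (fun j => ![r j, 1])) k
      = ∑ t ∈ (Finset.univ : Finset (Fin 5)).powerset,
          if t.card = k then ∏ j ∈ t, -r j else 0 := by
    rw [qcoeffs, hq, mcoeff, coeff_sum]
    refine Finset.sum_congr rfl fun t ht => ?_
    have := mcoeff_C_mul (5 - k) k (∏ j ∈ t, -r j) (X 0 ^ (5 - t.card) * X 1 ^ t.card)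
    rw [mcoeff] at this
    rw [this, mcoeff_X_pow]
    by_cases h : t.card = k <;> simp [h]
  rw [hs, ← Finset.sum_filter, ← Finset.powersetCard_eq_filter, esymm, map_sum, Finset.mul_sum]
  refine Finset.sum_congr rfl fun t ht => ?_
  rw [Finset.prod_neg, (Finset.mem_powersetCard.1 ht).2]
  simp

/-- The homogenization `a₀²⁴ q(-a₁/a₀, a₂/a₀, …, -a₅/a₀)` of a polynomial `q` in the elementary
symmetric functions of the affine roots. It is meaningful only for `q` of total degree at most `24`,
because of the truncated subtraction in the exponent of `a₀`. -/
def homog24 (q : MvPolynomial (Fin 5) ℂ) : MvPolynomial (Fin 6) ℂ :=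
  ∑ t ∈ q.support, C (coeff t q) *
    (X 0 ^ (24 - ∑ k, t k) * ∏ k : Fin 5, (C ((-1) ^ (k.succ : ℕ)) * X k.succ) ^ t k)

lemma homog24_isHomogeneous (q : MvPolynomial (Fin 5) ℂ) (hq : ∀ t ∈ q.support, ∑ k, t k ≤ 24) :
    (homog24 q).IsHomogeneous 24 := by
  refine IsHomogeneous.sum _ _ _ fun t ht => ?_
  have h1 : (∏ k : Fin 5, (C ((-1) ^ (k.succ : ℕ)) * X k.succ) ^ t k
      : MvPolynomial (Fin 6) ℂ).IsHomogeneous (∑ k, t k) := by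
    refine IsHomogeneous.prod _ _ _ fun k _ => ?_
    simpa using ((isHomogeneous_X ℂ k.succ).C_mul ((-1) ^ (k.succ : ℕ))).pow (t k)
  have h2 := ((isHomogeneous_X_pow (R := ℂ) (0 : Fin 6) (24 - ∑ k, t k)).mul h1).C_mul (coeff t q)
  rwa [Nat.sub_add_cancel (hq t ht)] at h2

lemma eval_homog24 (q : MvPolynomial (Fin 5) ℂ) (hq : ∀ t ∈ q.support, ∑ k, t k ≤ 24)
    (c : ℂ) (e : Fin 5 → ℂ) (a : Fin 6 → ℂ) (h0 : a 0 = c)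
    (ha : ∀ k : Fin 5, a k.succ = c * ((-1) ^ (k.succ : ℕ) * e k)) :
    eval a (homog24 q) = c ^ 24 * eval e q := by
  rw [homog24, map_sum, eval_eq', Finset.mul_sum]
  refine Finset.sum_congr rfl fun t ht => ?_
  have hk : ∀ k : Fin 5, (-1 : ℂ) ^ (k.succ : ℕ) * (c * ((-1) ^ (k.succ : ℕ) * e k)) = c * e k := by
    intro k
    have : (-1 : ℂ) ^ (k.succ : ℕ) * (-1) ^ (k.succ : ℕ) = 1 := by
      rw [← mul_pow]; simp
    linear_combination c * e k * this
  simp only [map_mul, eval_C, map_pow, eval_X, map_prod, h0, ha, hk]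
  simp only [mul_pow]
  rw [Finset.prod_mul_distrib, Finset.prod_pow_eq_pow_sum]
  have hp : c ^ (24 - ∑ k, t k) * c ^ (∑ k, t k) = c ^ 24 := by
    rw [← pow_add, Nat.sub_add_cancel (hq t ht)]
  rw [← hp]
  ring

/-! ### Extension to all roots by density -/

lemma continuous_coeff_prod_lin (s : Finset (Fin 5)) (m : Fin 2 →₀ ℕ) :
    Continuous fun l : Fin 5 → Fin 2 → ℂ => coeff m (∏ j ∈ s, lin (l j)) := by
  induction s using Finset.induction_on generalizing m with
  | empty => simpa using continuous_const
  | insert a s ha ih =>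
    simp only [Finset.prod_insert ha, coeff_mul]
    refine continuous_finsetSum _ fun x _ => Continuous.mul ?_ (ih _)
    simp only [lin, coeff_sub, coeff_C_mul]
    fun_prop

lemma continuous_Binv (n : ℕ) : Continuous fun l : Fin 5 → Fin 2 → ℂ => Binv l n := by
  have hm : ∀ a b i, Continuous fun l : Fin 5 → Fin 2 → ℂ => mcoeff a b (quarticOmit l i) :=
    fun a b i => continuous_coeff_prod_lin _ _
  have hS : ∀ i, Continuous fun l : Fin 5 → Fin 2 → ℂ => Sq (quarticOmit l i) := by
    intro i
    unfold Sq
    fun_prop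
  have hT : ∀ i, Continuous fun l : Fin 5 → Fin 2 → ℂ => Tq (quarticOmit l i) := by
    intro i
    unfold Tq
    fun_prop
  have key : ∀ (s : Finset (Fin 5)) (k : ℕ), Continuous fun l : Fin 5 → Fin 2 → ℂ =>
      (∏ i ∈ s, (Polynomial.C (Sq (quarticOmit l i) ^ 3 - 27 * Tq (quarticOmit l i) ^ 2)
        * Polynomial.X - Polynomial.C (Sq (quarticOmit l i) ^ 3))).coeff k := by
    intro s
    induction s using Finset.induction_on with
    | empty => intro k; simpa using continuous_const
    | insert a s ha ih =>
      intro k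
      simp only [Finset.prod_insert ha, Polynomial.coeff_mul]
      refine continuous_finsetSum _ fun x _ => Continuous.mul ?_ (ih _)
      simp only [Polynomial.coeff_sub, Polynomial.coeff_C_mul, Polynomial.coeff_C]
      split_ifs <;> fun_prop
  exact key Finset.univ (5 - n)

lemma dense_affine : Dense {l : Fin 5 → Fin 2 → ℂ | ∀ j, l j 1 ≠ 0} := by
  have h1 : Dense {v : Fin 2 → ℂ | v 1 ≠ 0} :=
    (dense_compl_singleton (0 : ℂ)).preimage (isOpenMap_eval (1 : Fin 2))
  have h2 := dense_pi (Set.univ : Set (Fin 5)) (fun j _ => h1)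
  convert h2 using 1
  ext l
  simp

/-- If `Bₙ(r) = q(e₁(r),…,e₅(r))` for affine roots, then the homogenization of `q` expresses `Bₙ`
through the coefficients of the quintic, for arbitrary homogeneous roots. -/
lemma Binv_eq_eval (n : ℕ) (q : MvPolynomial (Fin 5) ℂ) (hq : ∀ t ∈ q.support, ∑ k, t k ≤ 24)
    (hB : aeval (fun k : Fin 5 => esymm (Fin 5) ℂ (k + 1)) q = Bpoly n)
    (l : Fin 5 → Fin 2 → ℂ) :
    Binv l n = eval (qcoeffs (quinticOf l)) (homog24 q) := by
  have hc : Continuous fun l : Fin 5 → Fin 2 → ℂ =>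
      eval (qcoeffs (quinticOf l)) (homog24 q) :=
    (MvPolynomial.continuous_eval (homog24 q)).comp
      (continuous_pi fun k => continuous_coeff_prod_lin _ _)
  refine congrFun ((continuous_Binv n).ext_on dense_affine hc fun l hl => ?_) l
  set r : Fin 5 → ℂ := fun j => l j 0 / l j 1 with hr
  set c : ℂ := ∏ j, l j 1 with hcdef
  have hl0 : ∀ j, r j * l j 1 = l j 0 := fun j => div_mul_cancel₀ _ (hl j)
  have h1 : Binv l n = c ^ 24 * Binv (fun j => ![r j, 1]) n := by
    rw [Binv_scale (fun j => ![r j, 1]) l (fun j => l j 1) 1 ?_ n, one_pow, one_mul]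
    intro j k
    simp only [br, ← hl0]
    simp
    ring
  have h2 : quinticOf l = C c * quinticOf (fun j => ![r j, 1]) := by
    rw [quinticOf, quinticOf, hcdef, map_prod, ← Finset.prod_mul_distrib]
    refine Finset.prod_congr rfl fun j _ => ?_
    rw [lin, lin, ← hl0]
    simp
    ring
  have h3 : ∀ k, qcoeffs (quinticOf l) k
      = c * ((-1) ^ (k : ℕ) * eval r (esymm (Fin 5) ℂ k)) := fun k => by
    rw [← qcoeffs_affine, h2, qcoeffs, mcoeff_C_mul, qcoeffs]
  have h4 : eval r (Bpoly n) = eval (fun k : Fin 5 => eval r (esymm (Fin 5) ℂ (k + 1))) q := by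
    rw [← hB, ← coe_aeval_eq_eval, ← coe_aeval_eq_eval]
    simp only [RingHom.coe_coe]
    exact (comp_aeval_apply _ _ _)
  simp only
  rw [h1, ← eval_Bpoly, h4]
  refine (eval_homog24 q hq c _ _ ?_ fun k => ?_).symm
  · rw [h3]; simp
  · rw [h3]; simp

/-- Each `Bᵢ` is a homogeneous polynomial invariant of the binary quintic, of
degree `24` and weight `60`: it is given by a polynomial `P` of degree `24` in the
coefficients `a₀,…,a₅`, satisfying `P(gF) = (det g)⁻⁶⁰ P(F)` for `g ∈ GL₂(ℂ)`, and
in particular `P(gF) = P(F)` for `g ∈ SL₂(ℂ)`. -/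
theorem binv_is_homogeneous_invariant (i : Fin 6) :
    ∃ P : MvPolynomial (Fin 6) ℂ, P.IsHomogeneous 24 ∧
      (∀ l : Fin 5 → Fin 2 → ℂ,
        Binv l (i : ℕ) = MvPolynomial.eval (qcoeffs (quinticOf l)) P) ∧
      (∀ (g : Matrix.GeneralLinearGroup (Fin 2) ℂ) (l : Fin 5 → Fin 2 → ℂ),
        MvPolynomial.eval (qcoeffs (act g (quinticOf l))) P
          = ((((g : Matrix (Fin 2) (Fin 2) ℂ).det))⁻¹) ^ 60
              * MvPolynomial.eval (qcoeffs (quinticOf l)) P) ∧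
      (∀ (g : Matrix.SpecialLinearGroup (Fin 2) ℂ) (l : Fin 5 → Fin 2 → ℂ),
        MvPolynomial.eval (qcoeffs (actSL g (quinticOf l))) P
          = MvPolynomial.eval (qcoeffs (quinticOf l)) P) := by
  obtain ⟨q, hqB⟩ := (esymmAlgHom_fin_bijective ℂ 5).2 ⟨Bpoly i, Bpoly_isSymmetric i⟩
  have hval : (esymmAlgHom (Fin 5) ℂ 5 q).val = Bpoly i := congrArg Subtype.val hqB
  have hq : ∀ t ∈ q.support, ∑ k, t k ≤ 24 := fun t ht =>
    (degree_le_of_esymm q t ht).trans (by rw [hval]; exact degreeOf_Bpoly i)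
  have hB := Binv_eq_eval i q hq (by rw [← hval, esymmAlgHom_apply])
  have hact : ∀ (h : Matrix (Fin 2) (Fin 2) ℂ) (l : Fin 5 → Fin 2 → ℂ),
      eval (qcoeffs (aeval (fun i => ∑ j, C (h i j) * X j : Fin 2 → P2) (quinticOf l)))
        (homog24 q) = h.det ^ 60 * eval (qcoeffs (quinticOf l)) (homog24 q) := by
    intro h l
    rw [aeval_quinticOf, ← hB, ← hB,
      Binv_scale l _ 1 h.det (fun j k => by simp [br_rootAct]) i]
    simp
  refine ⟨homog24 q, homog24_isHomogeneous q hq, hB, fun g l => ?_, fun g l => ?_⟩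
  · rw [act, hact, Matrix.coe_units_inv, Matrix.det_nonsing_inv, Ring.inverse_eq_inv']
  · rw [actSL, hact, Matrix.SpecialLinearGroup.det_coe, one_pow, one_mul]

end
end

section
/- For every binary quintic F over ℂ, B₀(F) = (5¹⁵/2⁴⁰)·(−2²¹·K³ + 2¹⁴·3·K²J² − 2⁷·3·K·J⁴ + J⁶), where J = J(F), K = K(F). -/
/-!
The formula is the cube of `∏_{i<j} (λᵢλⱼ)² = 5⁵ (J² − 128 K)`, divided by `2⁴⁰`.

For a quartic with roots `p, q, r, s`, the three products `A = (pq)(rs)`, `B = (ps)(qr)`,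
`C = (pr)(qs)` satisfy `C = A + B`, and `S`, `T` are simple polynomials in them, whence
`256 (S³ − 27 T²) = A² B² C²` is the product of all squared brackets (`quartic_disc`). The leading
coefficient `B₀` is the product of the five numbers `S(Qᵢ)³ − 27 T(Qᵢ)²`, in which every pair of
roots of the quintic occurs three times.

For the expression of the discriminant through `J` and `K`, the quintic is written as
`F = L · Q` with `L = (xλ)` linear and `Q` a quartic with arbitrary coefficients. Then
`5⁵ (J(F)² − 128 K(F)) = Q(λ)² · 256 (S(Q)³ − 27 T(Q)²)` is a polynomial identity in `λ` and the
coefficients of `Q` (`quintic_disc`), and `Q(λ)` is the product of the brackets of `λ` with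
the roots of `Q`. The transvectants needed for `J` and `K` are computed on forms with
explicit coefficients.
-/


noncomputable section

open MvPolynomial

/-! ### Binary forms with explicit coefficients -/

/-- The binary form of order one with coefficients `a, b`. -/
def form1 (a b : ℂ) : P2 := C a * X 0 + C b * X 1

/-- The binary quadratic with plain (not binomially weighted) coefficients. -/
def form2 (a b c : ℂ) : P2 := C a * X 0 ^ 2 + C b * X 0 * X 1 + C c * X 1 ^ 2

/-- The binary cubic with plain (not binomially weighted) coefficients. -/
def form3 (a b c d : ℂ) : P2 :=
  C a * X 0 ^ 3 + C b * X 0 ^ 2 * X 1 + C c * X 0 * X 1 ^ 2 + C d * X 1 ^ 3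

/-- The binary quartic with plain (not binomially weighted) coefficients. The exponents `0` and
`1` are kept so that all terms have the shape used in `mcoeff_term`. -/
def form4 (a b c d e : ℂ) : P2 :=
  C a * X 0 ^ 4 * X 1 ^ 0 + C b * X 0 ^ 3 * X 1 ^ 1 + C c * X 0 ^ 2 * X 1 ^ 2
    + C d * X 0 ^ 1 * X 1 ^ 3 + C e * X 0 ^ 0 * X 1 ^ 4

/-- The binary quintic with plain (not binomially weighted) coefficients. -/
def form5 (a b c d e f : ℂ) : P2 :=
  C a * X 0 ^ 5 + C b * X 0 ^ 4 * X 1 + C c * X 0 ^ 3 * X 1 ^ 2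
    + C d * X 0 ^ 2 * X 1 ^ 3 + C e * X 0 * X 1 ^ 4 + C f * X 1 ^ 5

lemma pd0_form5 (a b c d e f : ℂ) :
    pd 0 (form5 a b c d e f) = form4 (5 * a) (4 * b) (3 * c) (2 * d) e := by
  apply MvPolynomial.funext
  intro x
  simp [pd, form4, form5, pderiv_X, Derivation.leibniz_pow]
  ring

lemma pd1_form5 (a b c d e f : ℂ) :
    pd 1 (form5 a b c d e f) = form4 b (2 * c) (3 * d) (4 * e) (5 * f) := by
  apply MvPolynomial.funext
  intro x
  simp [pd, form4, form5, pderiv_X, Derivation.leibniz_pow]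
  ring

lemma pd0_form4 (a b c d e : ℂ) :
    pd 0 (form4 a b c d e) = form3 (4 * a) (3 * b) (2 * c) d := by
  apply MvPolynomial.funext
  intro x
  simp [pd, form3, form4, pderiv_X, Derivation.leibniz_pow]
  ring

lemma pd1_form4 (a b c d e : ℂ) :
    pd 1 (form4 a b c d e) = form3 b (2 * c) (3 * d) (4 * e) := by
  apply MvPolynomial.funext
  intro x
  simp [pd, form3, form4, pderiv_X, Derivation.leibniz_pow]
  ring

lemma pd0_form3 (a b c d : ℂ) : pd 0 (form3 a b c d) = form2 (3 * a) (2 * b) c := by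
  apply MvPolynomial.funext
  intro x
  simp [pd, form2, form3, pderiv_X, Derivation.leibniz_pow]
  ring

lemma pd1_form3 (a b c d : ℂ) : pd 1 (form3 a b c d) = form2 b (2 * c) (3 * d) := by
  apply MvPolynomial.funext
  intro x
  simp [pd, form2, form3, pderiv_X, Derivation.leibniz_pow]
  ring

lemma pd0_form2 (a b c : ℂ) : pd 0 (form2 a b c) = form1 (2 * a) b := by
  apply MvPolynomial.funext
  intro x
  simp [pd, form1, form2, pderiv_X, Derivation.leibniz_pow]
  ring

lemma pd1_form2 (a b c : ℂ) : pd 1 (form2 a b c) = form1 b (2 * c) := by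
  apply MvPolynomial.funext
  intro x
  simp [pd, form1, form2, pderiv_X, Derivation.leibniz_pow]
  ring

lemma pd0_form1 (a b : ℂ) : pd 0 (form1 a b) = C a := by
  simp [pd, form1, pderiv_X]

lemma pd1_form1 (a b : ℂ) : pd 1 (form1 a b) = C b := by
  simp [pd, form1, pderiv_X]

/-! ### Transvectants -/

lemma transv_form2 (a b c a' b' c' : ℂ) :
    constantCoeff (transv 2 2 2 (form2 a b c) (form2 a' b' c')) =
      a * c' - b * b' / 2 + c * a' := by
  simp only [transv, Finset.sum_range_succ, Finset.sum_range_zero, Function.iterate_succ_apply,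
    Function.iterate_zero_apply, Nat.sub_self, Nat.sub_zero, Nat.reduceSub, pd0_form2, pd1_form2,
    pd0_form1, pd1_form1]
  simp [Nat.factorial]
  ring

lemma transv_form3 (a b c d : ℂ) :
    transv 3 3 2 (form3 a b c d) (form3 a b c d) =
      form2 ((6 * a * c - 2 * b ^ 2) / 9) ((18 * a * d - 2 * b * c) / 9)
        ((6 * b * d - 2 * c ^ 2) / 9) := by
  simp only [transv, Finset.sum_range_succ, Finset.sum_range_zero, Function.iterate_succ_apply,
    Function.iterate_zero_apply, Nat.sub_self, Nat.sub_zero, Nat.reduceSub, pd0_form3, pd1_form3,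
    pd0_form2, pd1_form2]
  apply MvPolynomial.funext
  intro x
  simp [Nat.factorial, form1, form2]
  ring

lemma transv_form5_form2 (a b c d e f a' b' c' : ℂ) :
    transv 5 2 2 (form5 a b c d e f) (form2 a' b' c') =
      form3 (a * c' - b * b' / 5 + c * a' / 10)
        (3 * b * c' / 5 - 3 * c * b' / 10 + 3 * d * a' / 10)
        (3 * c * c' / 10 - 3 * d * b' / 10 + 3 * e * a' / 5)
        (d * c' / 10 - e * b' / 5 + f * a') := by
  simp only [transv, Finset.sum_range_succ, Finset.sum_range_zero, Function.iterate_succ_apply,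
    Function.iterate_zero_apply, Nat.sub_self, Nat.sub_zero, Nat.reduceSub, pd0_form5, pd1_form5,
    pd0_form4, pd1_form4, pd0_form2, pd1_form2, pd0_form1, pd1_form1]
  apply MvPolynomial.funext
  intro x
  simp [Nat.factorial, form3]
  ring

lemma transv_form5 (a b c d e f : ℂ) :
    transv 5 5 4 (form5 a b c d e f) (form5 a b c d e f) =
      form2 ((20 * a * e - 8 * b * d + 3 * c ^ 2) / 50)
        ((50 * a * f - 6 * b * e + c * d) / 25)
        ((20 * b * f - 8 * c * e + 3 * d ^ 2) / 50) := by
  simp only [transv, Finset.sum_range_succ, Finset.sum_range_zero, Function.iterate_succ_apply,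
    Function.iterate_zero_apply, Nat.sub_self, Nat.sub_zero, Nat.reduceSub, pd0_form5, pd1_form5,
    pd0_form4, pd1_form4, pd0_form3, pd1_form3, pd0_form2, pd1_form2]
  apply MvPolynomial.funext
  intro x
  simp [Nat.factorial, Nat.choose, form1, form2]
  ring

/-! ### The quartic -/

lemma mcoeff_term (i j m n : ℕ) (c : ℂ) :
    mcoeff i j (C c * X 0 ^ m * X 1 ^ n) = if m = i ∧ n = j then c else 0 := by
  have h : (C c * X 0 ^ m * X 1 ^ n : P2) =
      monomial (Finsupp.single 0 m + Finsupp.single 1 n) c := by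
    rw [X_pow_eq_monomial, X_pow_eq_monomial, C_apply, monomial_mul, monomial_mul]
    simp
  have h2 : (Finsupp.single (0 : Fin 2) m + Finsupp.single 1 n =
      Finsupp.single 0 i + Finsupp.single 1 j) ↔ (m = i ∧ n = j) := by
    constructor
    · intro h
      have h0 := DFunLike.congr_fun h 0
      have h1 := DFunLike.congr_fun h 1
      simpa using And.intro h0 h1
    · rintro ⟨rfl, rfl⟩
      rfl
  rw [mcoeff, h, coeff_monomial]
  simp only [h2]

lemma Sq_form4 (a b c d e : ℂ) :
    Sq (form4 a b c d e) = a * e - b * d / 4 + c ^ 2 / 12 := by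
  simp only [Sq, form4, mcoeff_add, mcoeff_term]
  norm_num
  ring

lemma Tq_form4 (a b c d e : ℂ) :
    Tq (form4 a b c d e) = a * c * e / 6 + b * c * d / 48 - c ^ 3 / 216 - a * d ^ 2 / 16
      - b ^ 2 * e / 16 := by
  simp only [Tq, form4, mcoeff_add, mcoeff_term]
  norm_num
  ring

/-- A product of four linear forms, with its coefficients as symmetric functions of the roots. -/
lemma prod_lin (p q r s : Fin 2 → ℂ) :
    lin p * lin q * lin r * lin s =
      form4 (p 1 * q 1 * r 1 * s 1)
        (-(p 0 * q 1 * r 1 * s 1 + p 1 * q 0 * r 1 * s 1 + p 1 * q 1 * r 0 * s 1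
          + p 1 * q 1 * r 1 * s 0))
        (p 0 * q 0 * r 1 * s 1 + p 0 * q 1 * r 0 * s 1 + p 0 * q 1 * r 1 * s 0
          + p 1 * q 0 * r 0 * s 1 + p 1 * q 0 * r 1 * s 0 + p 1 * q 1 * r 0 * s 0)
        (-(p 0 * q 0 * r 0 * s 1 + p 0 * q 0 * r 1 * s 0 + p 0 * q 1 * r 0 * s 0
          + p 1 * q 0 * r 0 * s 0))
        (p 0 * q 0 * r 0 * s 0) := by
  apply MvPolynomial.funext
  intro x
  simp [lin, form4]
  ring

lemma Sq_prod_lin (p q r s : Fin 2 → ℂ) :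
    12 * Sq (lin p * lin q * lin r * lin s) =
      (br p q * br r s) ^ 2 + (br p q * br r s) * (br p s * br q r)
        + (br p s * br q r) ^ 2 := by
  rw [prod_lin, Sq_form4]
  simp only [br]
  ring

lemma Tq_prod_lin (p q r s : Fin 2 → ℂ) :
    432 * Tq (lin p * lin q * lin r * lin s) =
      (br p q * br r s - br p s * br q r) * (2 * (br p q * br r s) + br p s * br q r)
        * (br p q * br r s + 2 * (br p s * br q r)) := by
  rw [prod_lin, Tq_form4]
  simp only [br]
  ring

/-- `S³ − 27 T²` is the discriminant of the quartic, up to the factor `256`. -/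
lemma quartic_disc (p q r s : Fin 2 → ℂ) :
    Sq (lin p * lin q * lin r * lin s) ^ 3 - 27 * Tq (lin p * lin q * lin r * lin s) ^ 2 =
      (br p q * br p r * br p s * br q r * br q s * br r s) ^ 2 / 256 := by
  have hS := Sq_prod_lin p q r s
  have hT := Tq_prod_lin p q r s
  -- the Plücker relation among the three products of brackets
  have hP : br p r * br q s = br p q * br r s + br p s * br q r := by
    simp only [br]
    ring
  have hD : br p q * br p r * br p s * br q r * br q s * br r s =
      (br p q * br r s) * (br p s * br q r) * (br p q * br r s + br p s * br q r) := by
    rw [← hP]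
    ring
  rw [hD]
  generalize br p q * br r s = A at *
  generalize br p s * br q r = B at *
  have hS' : Sq (lin p * lin q * lin r * lin s) = (A ^ 2 + A * B + B ^ 2) / 12 := by
    rw [← hS]
    ring
  have hT' : Tq (lin p * lin q * lin r * lin s) =
      (A - B) * (2 * A + B) * (A + 2 * B) / 432 := by
    rw [← hT]
    ring
  rw [hS', hT']
  ring

/-! ### The quintic -/

lemma lin_mul_form4 (l : Fin 2 → ℂ) (a b c d e : ℂ) :
    form4 a b c d e * lin l =
      form5 (l 1 * a) (l 1 * b - l 0 * a) (l 1 * c - l 0 * b) (l 1 * d - l 0 * c)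
        (l 1 * e - l 0 * d) (-(l 0 * e)) := by
  apply MvPolynomial.funext
  intro x
  simp [lin, form4, form5]
  ring

/-- `5⁵ (J² − 128 K)`, expanded in the coefficients; this is the classical discriminant. -/
lemma J_sq_sub_K (a b c d e f : ℂ) :
    3125 * (Jinv (form5 a b c d e f) ^ 2 - 128 * Kinv (form5 a b c d e f)) =
      3125 * a ^ 4 * f ^ 4 - 2500 * a ^ 3 * b * e * f ^ 3 - 3750 * a ^ 3 * c * d * f ^ 3
        + 2000 * a ^ 3 * c * e ^ 2 * f ^ 2 + 2250 * a ^ 3 * d ^ 2 * e * f ^ 2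
        - 1600 * a ^ 3 * d * e ^ 3 * f + 256 * a ^ 3 * e ^ 5 + 2000 * a ^ 2 * b ^ 2 * d * f ^ 3
        - 50 * a ^ 2 * b ^ 2 * e ^ 2 * f ^ 2 + 2250 * a ^ 2 * b * c ^ 2 * f ^ 3
        - 2050 * a ^ 2 * b * c * d * e * f ^ 2 + 160 * a ^ 2 * b * c * e ^ 3 * f
        - 900 * a ^ 2 * b * d ^ 3 * f ^ 2 + 1020 * a ^ 2 * b * d ^ 2 * e ^ 2 * f
        - 192 * a ^ 2 * b * d * e ^ 4 - 900 * a ^ 2 * c ^ 3 * e * f ^ 2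
        + 825 * a ^ 2 * c ^ 2 * d ^ 2 * f ^ 2 + 560 * a ^ 2 * c ^ 2 * d * e ^ 2 * f
        - 128 * a ^ 2 * c ^ 2 * e ^ 4 - 630 * a ^ 2 * c * d ^ 3 * e * f
        + 144 * a ^ 2 * c * d ^ 2 * e ^ 3 + 108 * a ^ 2 * d ^ 5 * f - 27 * a ^ 2 * d ^ 4 * e ^ 2
        - 1600 * a * b ^ 3 * c * f ^ 3 + 160 * a * b ^ 3 * d * e * f ^ 2
        - 36 * a * b ^ 3 * e ^ 3 * f + 1020 * a * b ^ 2 * c ^ 2 * e * f ^ 2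
        + 560 * a * b ^ 2 * c * d ^ 2 * f ^ 2 - 746 * a * b ^ 2 * c * d * e ^ 2 * f
        + 144 * a * b ^ 2 * c * e ^ 4 + 24 * a * b ^ 2 * d ^ 3 * e * f
        - 6 * a * b ^ 2 * d ^ 2 * e ^ 3 - 630 * a * b * c ^ 3 * d * f ^ 2
        + 24 * a * b * c ^ 3 * e ^ 2 * f + 356 * a * b * c ^ 2 * d ^ 2 * e * f
        - 80 * a * b * c ^ 2 * d * e ^ 3 - 72 * a * b * c * d ^ 4 * f
        + 18 * a * b * c * d ^ 3 * e ^ 2 + 108 * a * c ^ 5 * f ^ 2 - 72 * a * c ^ 4 * d * e * f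
        + 16 * a * c ^ 4 * e ^ 3 + 16 * a * c ^ 3 * d ^ 3 * f - 4 * a * c ^ 3 * d ^ 2 * e ^ 2
        + 256 * b ^ 5 * f ^ 3 - 192 * b ^ 4 * c * e * f ^ 2 - 128 * b ^ 4 * d ^ 2 * f ^ 2
        + 144 * b ^ 4 * d * e ^ 2 * f - 27 * b ^ 4 * e ^ 4 + 144 * b ^ 3 * c ^ 2 * d * f ^ 2
        - 6 * b ^ 3 * c ^ 2 * e ^ 2 * f - 80 * b ^ 3 * c * d ^ 2 * e * f
        + 18 * b ^ 3 * c * d * e ^ 3 + 16 * b ^ 3 * d ^ 4 * f - 4 * b ^ 3 * d ^ 3 * e ^ 2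
        - 27 * b ^ 2 * c ^ 4 * f ^ 2 + 18 * b ^ 2 * c ^ 3 * d * e * f
        - 4 * b ^ 2 * c ^ 3 * e ^ 3 - 4 * b ^ 2 * c ^ 2 * d ^ 3 * f
        + b ^ 2 * c ^ 2 * d ^ 2 * e ^ 2 := by
  rw [Jinv, Kinv, cov3, cov2, cov1, transv_form5, transv_form5_form2, transv_form3,
    transv_form2, transv_form2]
  ring

/-- For `F = Q · (xλ)` the discriminant of `F` is `Q(λ)²` times that of `Q`. -/
lemma quintic_disc (l : Fin 2 → ℂ) (a b c d e : ℂ) :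
    3125 * (Jinv (form4 a b c d e * lin l) ^ 2 - 128 * Kinv (form4 a b c d e * lin l)) =
      eval l (form4 a b c d e) ^ 2 *
        (256 * (Sq (form4 a b c d e) ^ 3 - 27 * Tq (form4 a b c d e) ^ 2)) := by
  rw [lin_mul_form4, J_sq_sub_K, Sq_form4, Tq_form4]
  simp only [form4, map_add, map_mul, map_pow, eval_C, eval_X]
  ring

/-- The discriminant of a quintic as the product of its squared brackets. -/
lemma quintic_disc_br (p q r s t : Fin 2 → ℂ) :
    3125 * (Jinv (lin p * lin q * lin r * lin s * lin t) ^ 2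
        - 128 * Kinv (lin p * lin q * lin r * lin s * lin t)) =
      (br p q * br p r * br p s * br q r * br q s * br r s
        * (br p t * br q t * br r t * br s t)) ^ 2 := by
  have h := quintic_disc t
  have hQ := prod_lin p q r s
  have hev : eval t (lin p * lin q * lin r * lin s) = br p t * br q t * br r t * br s t := by
    simp [lin, br]
    ring
  have hD := quartic_disc p q r s
  rw [hQ] at hev hD ⊢
  rw [h, hev, hD]
  ring

lemma Binv_zero (l : Fin 5 → Fin 2 → ℂ) :
    Binv l 0 = ∏ i, (Sq (quarticOmit l i) ^ 3 - 27 * Tq (quarticOmit l i) ^ 2) := by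
  have h := Polynomial.coeff_prod_of_natDegree_le (s := Finset.univ) (f := fun i : Fin 5 =>
    (Polynomial.C (Sq (quarticOmit l i) ^ 3 - 27 * Tq (quarticOmit l i) ^ 2) * Polynomial.X
      - Polynomial.C (Sq (quarticOmit l i) ^ 3))) (n := 1) (by
        intro i _
        compute_degree)
  simp only [Finset.card_univ, Fintype.card_fin, mul_one] at h
  rw [Binv, Rbar, Nat.sub_zero, h]
  refine Finset.prod_congr rfl fun i _ => ?_
  rw [Polynomial.coeff_sub, Polynomial.coeff_C_mul, Polynomial.coeff_X_one,
    Polynomial.coeff_C_succ, mul_one, sub_zero]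

/-- The hypothesis is a closed statement about `Fin 5`, decidable for concrete indices. -/
lemma quarticOmit_eq_s1 (l : Fin 5 → Fin 2 → ℂ) (i j₁ j₂ j₃ j₄ : Fin 5)
    (h : (Finset.univ.erase i).val = {j₁, j₂, j₃, j₄}) :
    quarticOmit l i = lin (l j₁) * lin (l j₂) * lin (l j₃) * lin (l j₄) := by
  rw [quarticOmit, Finset.prod_eq_multiset_prod, h]
  simp [mul_assoc]

/-- `B₀(F) = (5¹⁵/2⁴⁰)(−2²¹K³ + 2¹⁴·3·K²J² − 2⁷·3·KJ⁴ + J⁶)`. -/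
theorem binv_zero_formula (l : Fin 5 → Fin 2 → ℂ) :
    Binv l 0 = 5 ^ 15 / 2 ^ 40 *
      (-(2 ^ 21) * Kinv (quinticOf l) ^ 3
        + 2 ^ 14 * 3 * Kinv (quinticOf l) ^ 2 * Jinv (quinticOf l) ^ 2
        - 2 ^ 7 * 3 * Kinv (quinticOf l) * Jinv (quinticOf l) ^ 4
        + Jinv (quinticOf l) ^ 6) := by
  have hF : quinticOf l = lin (l 0) * lin (l 1) * lin (l 2) * lin (l 3) * lin (l 4) := by
    rw [quinticOf, Fin.prod_univ_five]
  have h := quintic_disc_br (l 0) (l 1) (l 2) (l 3) (l 4)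
  rw [← hF] at h
  rw [Binv_zero, Fin.prod_univ_five,
    quarticOmit_eq_s1 l 0 1 2 3 4 (by decide), quarticOmit_eq_s1 l 1 0 2 3 4 (by decide),
    quarticOmit_eq_s1 l 2 0 1 3 4 (by decide), quarticOmit_eq_s1 l 3 0 1 2 4 (by decide),
    quarticOmit_eq_s1 l 4 0 1 2 3 (by decide)]
  simp only [quartic_disc]
  generalize quinticOf l = F at h ⊢
  -- the right-hand side is a perfect cube in `J² − 128 K`
  trans (3125 * (Jinv F ^ 2 - 128 * Kinv F)) ^ 3 / 2 ^ 40
  · rw [h]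
    ring
  · ring

end
end

section
/- For every binary quintic F over ℂ, B₂(F) = (5¹⁶/(2³⁰·3⁶))·(2¹¹·5³·LKJ − 2⁴·5³·LJ³ − 2¹⁵·3·K³ + 2⁷·11·13·K²J² − 3·131·K·J⁴ + 2·J⁶), where J = J(F), K = K(F), L = L(F). -/
/-!
Both sides of the formula are relative invariants: under a substitution `x = y₁ v + y₂ w` each is
multiplied by the 60th power of the determinant `(vw)`. For the left-hand side this is visible from
the classical expressions of `S` and `S³ - 27 T²` of a quartic in terms of the brackets of its roots
(`Sq_eq`, `D_eq`, `binvBr_moved`); for `J`, `K`, `L` it follows from the equivariance of each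
transvectant, checked on normalized coefficients (`c1_subst`, `c2_subst`, `c3_subst`, `polar2_subst`).

If the first two roots `λ₁, λ₂` are independent, the substitution with `v = λ₁`, `w = λ₂` turns the
quintic into a multiple of `x₁ x₂` times a cubic `a x₁³ + b x₁² x₂ + c x₁ x₂² + d x₂³`. There the
left-hand side is a symmetric function of the three remaining roots, hence a polynomial in
`a, b, c, d` (`sum_X`, `sum_Y`, `disc3_cub`), and the formula becomes a polynomial identity in these
four variables (`cubic_identity`). The case of dependent `λ₁, λ₂` follows by continuity.
-/

noncomputable section

open MvPolynomial

/-! ### Forms with normalized coefficients and their transvectants -/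

/-- The coefficient sequence shifted by one step. -/
def shift (a : ℕ → ℂ) (k : ℕ) : ℂ := a (k + 1)

/-- The binary form `Σ (n choose k) a_k x₁^(n-k) x₂^k` of order `n` with normalized coefficients
`a 0, …, a n`, built by Pascal's rule; the values `a k` with `k > n` play no role. -/
def bform : ℕ → (ℕ → ℂ) → P2
  | 0, a => C (a 0)
  | n + 1, a => X 0 * bform n a + X 1 * bform n (shift a)

lemma pd_zero_bform (n : ℕ) (a : ℕ → ℂ) :
    pd 0 (bform (n + 1) a) = C (n + 1 : ℂ) * bform n a := by
  induction n generalizing a with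
  | zero => simp [pd, bform, pderiv_X]
  | succ n ih =>
    rw [bform, pd, map_add, Derivation.leibniz, Derivation.leibniz]
    change _ • pd 0 _ + _ + (_ • pd 0 _ + _) = _
    rw [ih, ih, bform, pderiv_X_self, pderiv_X_of_ne (by decide)]
    simp only [smul_eq_mul, Nat.cast_add, Nat.cast_one, map_add, map_one]
    ring

lemma pd_one_bform (n : ℕ) (a : ℕ → ℂ) :
    pd 1 (bform (n + 1) a) = C (n + 1 : ℂ) * bform n (shift a) := by
  induction n generalizing a with
  | zero => simp [pd, bform, pderiv_X]
  | succ n ih =>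
    rw [bform, pd, map_add, Derivation.leibniz, Derivation.leibniz]
    change _ • pd 1 _ + _ + (_ • pd 1 _ + _) = _
    rw [ih, ih, bform, pderiv_X_self, pderiv_X_of_ne (by decide)]
    simp only [smul_eq_mul, Nat.cast_add, Nat.cast_one, map_add, map_one, bform]
    ring

lemma pd_C_mul (i : Fin 2) (c : ℂ) (F : P2) : pd i (C c * F) = C c * pd i F := by
  simp [pd]

/-- Normalized coefficients of `(F,F)₄` for a quintic `F` with normalized coefficients `a`. -/
def c1 (a : ℕ → ℂ) : ℕ → ℂ
  | 0 => 2 * (a 0 * a 4 - 4 * a 1 * a 3 + 3 * a 2 ^ 2)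
  | 1 => a 0 * a 5 - 3 * a 1 * a 4 + 2 * a 2 * a 3
  | _ => 2 * (a 1 * a 5 - 4 * a 2 * a 4 + 3 * a 3 ^ 2)

/-- Normalized coefficients of `(F,G)₂` for a quintic `F` and a quadratic `G`. -/
def c2 (a g : ℕ → ℂ) (k : ℕ) : ℂ := a k * g 2 - 2 * a (k + 1) * g 1 + a (k + 2) * g 0

/-- Normalized coefficients of `(G,G)₂` for a cubic `G`. -/
def c3 (c : ℕ → ℂ) : ℕ → ℂ
  | 0 => 2 * (c 0 * c 2 - c 1 ^ 2)
  | 1 => c 0 * c 3 - c 1 * c 2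
  | _ => 2 * (c 1 * c 3 - c 2 ^ 2)

/-- The joint invariant `(G,H)₂` of two quadratics. -/
def polar2 (g h : ℕ → ℂ) : ℂ := g 0 * h 2 - 2 * g 1 * h 1 + g 2 * h 0

lemma transv_bform_554 (a : ℕ → ℂ) : transv 5 5 4 (bform 5 a) (bform 5 a) = bform 2 (c1 a) := by
  apply MvPolynomial.funext
  intro x
  simp only [transv, Finset.sum_range_succ, Finset.sum_range_zero, Function.iterate_succ_apply,
    Function.iterate_zero_apply, pd_zero_bform, pd_one_bform, pd_C_mul, Nat.reduceSub]
  simp [bform, shift, c1, Nat.factorial, Nat.choose]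
  ring

lemma transv_bform_522 (a g : ℕ → ℂ) :
    transv 5 2 2 (bform 5 a) (bform 2 g) = bform 3 (c2 a g) := by
  apply MvPolynomial.funext
  intro x
  simp only [transv, Finset.sum_range_succ, Finset.sum_range_zero, Function.iterate_succ_apply,
    Function.iterate_zero_apply, pd_zero_bform, pd_one_bform, pd_C_mul, Nat.reduceSub]
  simp [bform, shift, c2, Nat.factorial, Nat.choose]
  ring

lemma transv_bform_332 (c : ℕ → ℂ) : transv 3 3 2 (bform 3 c) (bform 3 c) = bform 2 (c3 c) := by
  apply MvPolynomial.funext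
  intro x
  simp only [transv, Finset.sum_range_succ, Finset.sum_range_zero, Function.iterate_succ_apply,
    Function.iterate_zero_apply, pd_zero_bform, pd_one_bform, pd_C_mul, Nat.reduceSub]
  simp [bform, shift, c3, Nat.factorial, Nat.choose]
  ring

lemma transv_bform_222 (g h : ℕ → ℂ) :
    constantCoeff (transv 2 2 2 (bform 2 g) (bform 2 h)) = polar2 g h := by
  simp only [transv, Finset.sum_range_succ, Finset.sum_range_zero, Function.iterate_succ_apply,
    Function.iterate_zero_apply, pd_zero_bform, pd_one_bform, pd_C_mul, Nat.reduceSub]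
  simp [bform, shift, polar2, Nat.factorial, Nat.choose]
  ring

/-- Normalized coefficients of the covariant `C₂` of a quintic. -/
def cubicCov (a : ℕ → ℂ) : ℕ → ℂ := c2 a (c1 a)
/-- The invariant `J` in terms of normalized coefficients. -/
def Jc (a : ℕ → ℂ) : ℂ := -(1 / 2) * polar2 (c1 a) (c1 a)
/-- The invariant `K` in terms of normalized coefficients. -/
def Kc (a : ℕ → ℂ) : ℂ := 1 / 8 * polar2 (c1 a) (c3 (cubicCov a))
/-- The invariant `L` in terms of normalized coefficients. -/
def Lc (a : ℕ → ℂ) : ℂ := 1 / 96 * polar2 (c3 (cubicCov a)) (c3 (cubicCov a))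

lemma Jinv_bform (a : ℕ → ℂ) : Jinv (bform 5 a) = Jc a := by
  rw [Jinv, cov1, transv_bform_554, transv_bform_222, Jc]

lemma Kinv_bform (a : ℕ → ℂ) : Kinv (bform 5 a) = Kc a := by
  rw [Kinv, cov3, cov2, cov1, transv_bform_554, transv_bform_522, transv_bform_332,
    transv_bform_222, Kc, cubicCov]

lemma Linv_bform (a : ℕ → ℂ) : Linv (bform 5 a) = Lc a := by
  rw [Linv, cov3, cov2, cov1, transv_bform_554, transv_bform_522, transv_bform_332,
    transv_bform_222, Lc, cubicCov]

/-! ### Linear substitutions -/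

/-- Polarization of a form at the point `(p, q)`, on normalized coefficients. -/
def polar (p q : ℂ) (a : ℕ → ℂ) (k : ℕ) : ℂ := p * a k + q * a (k + 1)

/-- Normalized coefficients of `F(p y₁ + r y₂, q y₁ + s y₂)` for a form `F` of order `n`: the `k`-th one
is the polarization of `F` at `n - k` copies of `(p, q)` and `k` copies of `(r, s)`. -/
def subst (n : ℕ) (p q r s : ℂ) (a : ℕ → ℂ) (k : ℕ) : ℂ :=
  (polar p q)^[n - k] ((polar r s)^[k] a) 0

lemma c1_subst (p q r s : ℂ) (a : ℕ → ℂ) (k : ℕ) (hk : k < 3) :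
    c1 (subst 5 p q r s a) k = (p * s - q * r) ^ 4 * subst 2 p q r s (c1 a) k := by
  interval_cases k <;> simp [c1, subst, polar] <;> ring

lemma c2_subst (p q r s : ℂ) (a g : ℕ → ℂ) (k : ℕ) (hk : k < 4) :
    c2 (subst 5 p q r s a) (subst 2 p q r s g) k
      = (p * s - q * r) ^ 2 * subst 3 p q r s (c2 a g) k := by
  interval_cases k <;> simp [c2, subst, polar] <;> ring

lemma c3_subst (p q r s : ℂ) (c : ℕ → ℂ) (k : ℕ) (hk : k < 3) :
    c3 (subst 3 p q r s c) k = (p * s - q * r) ^ 2 * subst 2 p q r s (c3 c) k := by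
  interval_cases k <;> simp [c3, subst, polar] <;> ring

lemma polar2_subst (p q r s : ℂ) (g h : ℕ → ℂ) :
    polar2 (subst 2 p q r s g) (subst 2 p q r s h) = (p * s - q * r) ^ 2 * polar2 g h := by
  simp [polar2, subst, polar]; ring

lemma cubicCov_subst (p q r s : ℂ) (a : ℕ → ℂ) (k : ℕ) (hk : k < 4) :
    cubicCov (subst 5 p q r s a) k = (p * s - q * r) ^ 6 * subst 3 p q r s (cubicCov a) k := by
  have h := c2_subst p q r s a (c1 a) k hk
  rw [c2] at h
  rw [cubicCov, c2, c1_subst _ _ _ _ _ 0 (by norm_num), c1_subst _ _ _ _ _ 1 (by norm_num),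
    c1_subst _ _ _ _ _ 2 (by norm_num)]
  change _ = _ * subst 3 p q r s (c2 a (c1 a)) k
  linear_combination (p * s - q * r) ^ 4 * h

lemma c3_cubicCov_subst (p q r s : ℂ) (a : ℕ → ℂ) (k : ℕ) (hk : k < 3) :
    c3 (cubicCov (subst 5 p q r s a)) k
      = (p * s - q * r) ^ 14 * subst 2 p q r s (c3 (cubicCov a)) k := by
  have h := c3_subst p q r s (cubicCov a) k hk
  have h0 := cubicCov_subst p q r s a 0 (by norm_num)
  have h1 := cubicCov_subst p q r s a 1 (by norm_num)
  have h2 := cubicCov_subst p q r s a 2 (by norm_num)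
  have h3 := cubicCov_subst p q r s a 3 (by norm_num)
  interval_cases k <;> simp only [c3, h0, h1, h2, h3] at h ⊢ <;>
    linear_combination (p * s - q * r) ^ 12 * h

lemma Jc_subst (p q r s : ℂ) (a : ℕ → ℂ) :
    Jc (subst 5 p q r s a) = (p * s - q * r) ^ 10 * Jc a := by
  have h := polar2_subst p q r s (c1 a) (c1 a)
  rw [polar2] at h
  rw [Jc, polar2, c1_subst _ _ _ _ _ 0 (by norm_num), c1_subst _ _ _ _ _ 1 (by norm_num),
    c1_subst _ _ _ _ _ 2 (by norm_num), Jc]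
  linear_combination -(1 / 2) * (p * s - q * r) ^ 8 * h

lemma Kc_subst (p q r s : ℂ) (a : ℕ → ℂ) :
    Kc (subst 5 p q r s a) = (p * s - q * r) ^ 20 * Kc a := by
  have h := polar2_subst p q r s (c1 a) (c3 (cubicCov a))
  rw [polar2] at h
  rw [Kc, polar2, c1_subst _ _ _ _ _ 0 (by norm_num), c1_subst _ _ _ _ _ 1 (by norm_num),
    c1_subst _ _ _ _ _ 2 (by norm_num), c3_cubicCov_subst _ _ _ _ _ 0 (by norm_num),
    c3_cubicCov_subst _ _ _ _ _ 1 (by norm_num), c3_cubicCov_subst _ _ _ _ _ 2 (by norm_num), Kc]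
  linear_combination 1 / 8 * (p * s - q * r) ^ 18 * h

lemma Lc_subst (p q r s : ℂ) (a : ℕ → ℂ) :
    Lc (subst 5 p q r s a) = (p * s - q * r) ^ 30 * Lc a := by
  have h := polar2_subst p q r s (c3 (cubicCov a)) (c3 (cubicCov a))
  rw [polar2] at h
  rw [Lc, polar2, c3_cubicCov_subst _ _ _ _ _ 0 (by norm_num),
    c3_cubicCov_subst _ _ _ _ _ 1 (by norm_num), c3_cubicCov_subst _ _ _ _ _ 2 (by norm_num), Lc]
  linear_combination 1 / 96 * (p * s - q * r) ^ 28 * h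

/-- The combination of `J`, `K`, `L` on the right-hand side of the formula for `B₂`. -/
def invComb (a : ℕ → ℂ) : ℂ :=
  5 ^ 16 / (2 ^ 30 * 3 ^ 6) *
      (2 ^ 11 * 5 ^ 3 * Lc a * Kc a * Jc a - 2 ^ 4 * 5 ^ 3 * Lc a * Jc a ^ 3
        - 2 ^ 15 * 3 * Kc a ^ 3 + 2 ^ 7 * 11 * 13 * Kc a ^ 2 * Jc a ^ 2
        - 3 * 131 * Kc a * Jc a ^ 4 + 2 * Jc a ^ 6)

lemma invComb_subst (p q r s : ℂ) (a : ℕ → ℂ) :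
    invComb (subst 5 p q r s a) = (p * s - q * r) ^ 60 * invComb a := by
  simp only [invComb, Jc_subst, Kc_subst, Lc_subst]
  ring

/-! ### The quintic and its roots -/

/-- Effect of multiplication by the linear form `(xv)` on plain (not normalized) coefficients. -/
def mulLin (v : Fin 2 → ℂ) (a : ℕ → ℂ) : ℕ → ℂ
  | 0 => v 1 * a 0
  | k + 1 => v 1 * a (k + 1) - v 0 * a k

/-- Plain coefficients of the constant form `1`. -/
def oneSeq (k : ℕ) : ℂ := if k = 0 then 1 else 0

/-- Normalized coefficients of the quintic with homogeneous roots `l`. -/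
def rootc (l : Fin 5 → Fin 2 → ℂ) (k : ℕ) : ℂ :=
  mulLin (l 0) (mulLin (l 1) (mulLin (l 2) (mulLin (l 3) (mulLin (l 4) oneSeq)))) k
    / (Nat.choose 5 k : ℂ)

lemma quinticOf_eq (l : Fin 5 → Fin 2 → ℂ) : quinticOf l = bform 5 (rootc l) := by
  apply MvPolynomial.funext
  intro x
  simp [quinticOf, Fin.prod_univ_five, lin, bform, shift, rootc, mulLin, oneSeq, Nat.choose]
  ring

/-- The root of the linear form obtained from `(xv)` by substituting `x = y₁ (p, q) + y₂ (r, s)`. -/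
def moved (p q r s : ℂ) (v : Fin 2 → ℂ) : Fin 2 → ℂ :=
  ![s * v 0 - r * v 1, p * v 1 - q * v 0]

lemma rootc_moved (p q r s : ℂ) (l : Fin 5 → Fin 2 → ℂ) (k : ℕ) (hk : k < 6) :
    rootc (fun i => moved p q r s (l i)) k = subst 5 p q r s (rootc l) k := by
  interval_cases k <;>
  simp [rootc, mulLin, oneSeq, moved, subst, polar, Nat.choose] <;>
  ring

lemma br_moved (p q r s : ℂ) (v w : Fin 2 → ℂ) :
    br (moved p q r s v) (moved p q r s w) = (p * s - q * r) * br v w := by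
  simp [br, moved]
  ring

/-! ### Bracket formulas for the left-hand side -/

/-- The invariant `S` of the quartic with roots `a, b, c, d`, in terms of brackets. -/
def Sbr (a b c d : Fin 2 → ℂ) : ℂ :=
  ((br a b * br c d) ^ 2 + br a b * br c d * (br a c * br d b) + (br a c * br d b) ^ 2) / 12

/-- The invariant `S³ - 27 T²` (a multiple of the discriminant) of the quartic with roots
`a, b, c, d`, in terms of brackets. -/
def Dbr (a b c d : Fin 2 → ℂ) : ℂ :=
  (br a b * br a c * br a d * br b c * br b d * br c d) ^ 2 / 256

lemma mcoeff_monomial (i j m n : ℕ) (a : ℂ) :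
    mcoeff i j (C a * X 0 ^ m * X 1 ^ n) = if m = i ∧ n = j then a else 0 := by
  have h : (C a * X 0 ^ m * X 1 ^ n : P2)
      = monomial (Finsupp.single 0 m + Finsupp.single 1 n) a := by
    rw [X_pow_eq_monomial, X_pow_eq_monomial, mul_assoc, monomial_mul, C_mul_monomial]
    simp
  rw [mcoeff, h, coeff_monomial]
  congr 1
  simp [Finsupp.ext_iff, Fin.forall_fin_two]

lemma quartic_expand (a b c d : Fin 2 → ℂ) :
    lin a * lin b * lin c * lin d =
      C (mulLin a (mulLin b (mulLin c (mulLin d oneSeq))) 0) * X 0 ^ 4 * X 1 ^ 0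
      + C (mulLin a (mulLin b (mulLin c (mulLin d oneSeq))) 1) * X 0 ^ 3 * X 1 ^ 1
      + C (mulLin a (mulLin b (mulLin c (mulLin d oneSeq))) 2) * X 0 ^ 2 * X 1 ^ 2
      + C (mulLin a (mulLin b (mulLin c (mulLin d oneSeq))) 3) * X 0 ^ 1 * X 1 ^ 3
      + C (mulLin a (mulLin b (mulLin c (mulLin d oneSeq))) 4) * X 0 ^ 0 * X 1 ^ 4 := by
  apply MvPolynomial.funext
  intro x
  simp [lin, mulLin, oneSeq]
  ring

lemma Sq_eq (a b c d : Fin 2 → ℂ) : Sq (lin a * lin b * lin c * lin d) = Sbr a b c d := by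
  rw [quartic_expand, Sq]
  simp only [mcoeff_add, mcoeff_monomial]
  simp [mulLin, oneSeq, Sbr, br]
  ring

lemma Tq_eq (a b c d : Fin 2 → ℂ) : Tq (lin a * lin b * lin c * lin d) =
    (br a c * br d b - br a b * br c d) * (br a b * br c d + 2 * (br a c * br d b)) *
     (2 * (br a b * br c d) + br a c * br d b) / 432 := by
  rw [quartic_expand, Tq]
  simp only [mcoeff_add, mcoeff_monomial]
  simp [mulLin, oneSeq, br]
  ring

lemma D_eq (a b c d : Fin 2 → ℂ) :
    Sq (lin a * lin b * lin c * lin d) ^ 3 - 27 * Tq (lin a * lin b * lin c * lin d) ^ 2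
      = Dbr a b c d := by
  -- the Plücker relation between the three products of complementary brackets
  have h : br a d * br b c = -(br a b * br c d) - br a c * br d b := by
    simp only [br]; ring
  have h' : br b d = - br d b := by simp only [br]; ring
  have h2 : Dbr a b c d
      = ((br a b * br c d) * (br a c * br d b) * (br a d * br b c)) ^ 2 / 256 := by
    rw [Dbr, h']; ring
  rw [h2, h, Sq_eq, Tq_eq, Sbr]
  ring

/-- The coefficient of `z³` in `∏ (D i * z - E i)`. -/
def coeffThree (D E : Fin 5 → ℂ) : ℂ :=
  D 2 * D 3 * D 4 * E 0 * E 1 + D 1 * D 3 * D 4 * E 0 * E 2 + D 1 * D 2 * D 4 * E 0 * E 3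
    + D 1 * D 2 * D 3 * E 0 * E 4 + D 0 * D 3 * D 4 * E 1 * E 2 + D 0 * D 2 * D 4 * E 1 * E 3
    + D 0 * D 2 * D 3 * E 1 * E 4 + D 0 * D 1 * D 4 * E 2 * E 3 + D 0 * D 1 * D 3 * E 2 * E 4
    + D 0 * D 1 * D 2 * E 3 * E 4

lemma coeff_lin_mul (d e : ℂ) (P : Polynomial ℂ) (n : ℕ) :
    ((Polynomial.C d * Polynomial.X - Polynomial.C e) * P).coeff (n + 1)
      = d * P.coeff n - e * P.coeff (n + 1) := by
  rw [sub_mul, mul_assoc, Polynomial.coeff_sub, Polynomial.coeff_C_mul, Polynomial.coeff_X_mul,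
    Polynomial.coeff_C_mul]

lemma coeff_lin_mul_zero (d e : ℂ) (P : Polynomial ℂ) :
    ((Polynomial.C d * Polynomial.X - Polynomial.C e) * P).coeff 0 = -e * P.coeff 0 := by
  rw [sub_mul, mul_assoc, Polynomial.coeff_sub, Polynomial.coeff_C_mul,
    Polynomial.coeff_X_mul_zero, Polynomial.coeff_C_mul]
  ring

lemma coeff_prod_linear (D E : Fin 5 → ℂ) :
    (∏ i : Fin 5, (Polynomial.C (D i) * Polynomial.X - Polynomial.C (E i))).coeff 3
      = coeffThree D E := by
  rw [Fin.prod_univ_five, ← mul_one (_ * _), mul_assoc, mul_assoc, mul_assoc, mul_assoc]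
  simp only [coeff_lin_mul, coeff_lin_mul_zero, Polynomial.coeff_one, coeffThree]
  norm_num
  ring

/-- The values `S(Q_i)`, in terms of brackets. -/
def Sb (l : Fin 5 → Fin 2 → ℂ) : Fin 5 → ℂ :=
  ![Sbr (l 1) (l 2) (l 3) (l 4), Sbr (l 0) (l 2) (l 3) (l 4), Sbr (l 0) (l 1) (l 3) (l 4),
    Sbr (l 0) (l 1) (l 2) (l 4), Sbr (l 0) (l 1) (l 2) (l 3)]

/-- The values `S(Q_i)³ - 27 T(Q_i)²`, in terms of brackets. -/
def Db (l : Fin 5 → Fin 2 → ℂ) : Fin 5 → ℂ :=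
  ![Dbr (l 1) (l 2) (l 3) (l 4), Dbr (l 0) (l 2) (l 3) (l 4), Dbr (l 0) (l 1) (l 3) (l 4),
    Dbr (l 0) (l 1) (l 2) (l 4), Dbr (l 0) (l 1) (l 2) (l 3)]

/-- The invariant `B₂` in terms of brackets. -/
def binvBr (l : Fin 5 → Fin 2 → ℂ) : ℂ := coeffThree (Db l) (fun i => Sb l i ^ 3)

lemma quarticOmit_eq_s3 (l : Fin 5 → Fin 2 → ℂ) (i : Fin 5) :
    quarticOmit l i = ![lin (l 1) * lin (l 2) * lin (l 3) * lin (l 4),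
      lin (l 0) * lin (l 2) * lin (l 3) * lin (l 4),
      lin (l 0) * lin (l 1) * lin (l 3) * lin (l 4),
      lin (l 0) * lin (l 1) * lin (l 2) * lin (l 4),
      lin (l 0) * lin (l 1) * lin (l 2) * lin (l 3)] i := by
  rw [quarticOmit]
  fin_cases i
  · rw [show Finset.univ.erase (⟨0, by norm_num⟩ : Fin 5) = {1, 2, 3, 4} by decide]
    simp [mul_assoc]
  · rw [show Finset.univ.erase (⟨1, by norm_num⟩ : Fin 5) = {0, 2, 3, 4} by decide]
    simp [mul_assoc]
  · rw [show Finset.univ.erase (⟨2, by norm_num⟩ : Fin 5) = {0, 1, 3, 4} by decide]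
    simp [mul_assoc]
  · rw [show Finset.univ.erase (⟨3, by norm_num⟩ : Fin 5) = {0, 1, 2, 4} by decide]
    simp [mul_assoc]
  · rw [show Finset.univ.erase (⟨4, by norm_num⟩ : Fin 5) = {0, 1, 2, 3} by decide]
    simp [mul_assoc]

lemma Binv_two (l : Fin 5 → Fin 2 → ℂ) : Binv l 2 = binvBr l := by
  have hS : ∀ i, Sq (quarticOmit l i) = Sb l i := by
    intro i
    rw [quarticOmit_eq_s3]
    fin_cases i <;> exact Sq_eq _ _ _ _
  have hD : ∀ i, Sq (quarticOmit l i) ^ 3 - 27 * Tq (quarticOmit l i) ^ 2 = Db l i := by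
    intro i
    rw [quarticOmit_eq_s3]
    fin_cases i <;> exact D_eq _ _ _ _
  simp only [Binv, Rbar, hD]
  simp only [hS]
  exact coeff_prod_linear _ _

lemma binvBr_moved (p q r s : ℂ) (l : Fin 5 → Fin 2 → ℂ) :
    binvBr (fun i => moved p q r s (l i)) = (p * s - q * r) ^ 60 * binvBr l := by
  have hS : ∀ a b c d, Sbr (moved p q r s a) (moved p q r s b) (moved p q r s c)
      (moved p q r s d) = (p * s - q * r) ^ 4 * Sbr a b c d := by
    intro a b c d
    simp only [Sbr, br_moved]; ring
  have hD : ∀ a b c d, Dbr (moved p q r s a) (moved p q r s b) (moved p q r s c)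
      (moved p q r s d) = (p * s - q * r) ^ 12 * Dbr a b c d := by
    intro a b c d
    simp only [Dbr, br_moved]; ring
  have hS' : ∀ i, Sb (fun i => moved p q r s (l i)) i = (p * s - q * r) ^ 4 * Sb l i := by
    intro i
    fin_cases i <;> exact hS _ _ _ _
  have hD' : ∀ i, Db (fun i => moved p q r s (l i)) i = (p * s - q * r) ^ 12 * Db l i := by
    intro i
    fin_cases i <;> exact hD _ _ _ _
  simp only [binvBr, coeffThree, hS', hD']
  ring

/-- Only the coefficients `a 0, …, a 5` matter. -/
lemma invComb_congr {a b : ℕ → ℂ} (h : ∀ k < 6, a k = b k) : invComb a = invComb b := by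
  simp [invComb, Jc, Kc, Lc, polar2, c3, cubicCov, c2, c1, h]

lemma invComb_rootc_moved (p q r s : ℂ) (l : Fin 5 → Fin 2 → ℂ) :
    invComb (rootc (fun i => moved p q r s (l i))) = (p * s - q * r) ^ 60 * invComb (rootc l) := by
  rw [invComb_congr (rootc_moved p q r s l), invComb_subst]

/-! ### Quintics divisible by `x₁ x₂` -/

/-- The discriminant of the cubic `a x₁³ + b x₁² x₂ + c x₁ x₂² + d x₂³`. -/
def disc3 (a b c d : ℂ) : ℂ :=
  b ^ 2 * c ^ 2 - 4 * a * c ^ 3 - 4 * b ^ 3 * d + 18 * a * b * c * d - 27 * a ^ 2 * d ^ 2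

/-- The symmetric function of the roots of a cubic occurring in `sum_X`, as a polynomial in the
coefficients of the cubic. -/
def polyX (a b c d : ℂ) : ℂ :=
  a ^ 2 * d ^ 2 * (-216*a^4*d^4 + 72*a^3*b*c*d^3 + 19*a^3*c^3*d^2 + 19*a^2*b^3*d^3
    + 36*a^2*b^2*c^2*d^2 - 48*a^2*b*c^4*d + 8*a^2*c^6 - 48*a*b^4*c*d^2 + 37*a*b^3*c^3*d
    - 6*a*b^2*c^5 + 8*b^6*d^2 - 6*b^5*c^2*d + b^4*c^4)

/-- The symmetric function of the roots of a cubic occurring in `sum_Y`, as a polynomial in the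
coefficients of the cubic. -/
def polyY (a b c d : ℂ) : ℂ :=
  - 576*a^6*d^6 + 784*a^5*b*c*d^5 + 168*a^5*c^3*d^4 + 168*a^4*b^3*d^5 - 1044*a^4*b^2*c^2*d^4
    + 34*a^4*b*c^4*d^3 + 19*a^4*c^6*d^2 + 34*a^3*b^4*c*d^4 + 667*a^3*b^3*c^3*d^3
    - 269*a^3*b^2*c^5*d^2 + 46*a^3*b*c^7*d - 4*a^3*c^9 + 19*a^2*b^6*d^4
    - 269*a^2*b^5*c^2*d^3 + 89*a^2*b^4*c^4*d^2 - 11*a^2*b^3*c^6*d + a^2*b^2*c^8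
    + 46*a*b^7*c*d^3 - 11*a*b^6*c^3*d^2 - 4*b^9*d^3 + b^8*c^2*d^2

/-- Normalized coefficients of `x₁ x₂ (a x₁³ + b x₁² x₂ + c x₁ x₂² + d x₂³)`. -/
def seqN (a b c d : ℂ) : ℕ → ℂ
  | 1 => a / 5
  | 2 => b / 10
  | 3 => c / 10
  | 4 => d / 5
  | _ => 0

/-- The invariant `J` of `x₁ x₂ (a x₁³ + b x₁² x₂ + c x₁ x₂² + d x₂³)`. -/
def polyJ (a b c d : ℂ) : ℂ :=
  (9*a^2*d^2 - 19*a*b*c*d + 6*a*c^3 + 6*b^3*d - 2*b^2*c^2) / 625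

/-- The invariant `K` of `x₁ x₂ (a x₁³ + b x₁² x₂ + c x₁ x₂² + d x₂³)`. -/
def polyK (a b c d : ℂ) : ℂ :=
  (864*a^4*d^4 - 648*a^3*b*c*d^3 + 152*a^3*c^3*d^2 + 152*a^2*b^3*d^3 + 50*a^2*b^2*c^2*d^2
    - 57*a^2*b*c^4*d + 9*a^2*c^6 - 57*a*b^4*c*d^2 + 37*a*b^3*c^3*d - 6*a*b^2*c^5
    + 9*b^6*d^2 - 6*b^5*c^2*d + b^4*c^4) / 12500000

lemma Jc_seqN (a b c d : ℂ) : Jc (seqN a b c d) = polyJ a b c d := by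
  simp [Jc, polar2, c1, seqN, polyJ]
  ring

lemma Kc_seqN (a b c d : ℂ) : Kc (seqN a b c d) = polyK a b c d := by
  simp [Kc, polar2, c1, c2, c3, cubicCov, seqN, polyK]
  ring

set_option maxHeartbeats 4000000 in
/-- The formula for `B₂` on the quintics `x₁ x₂ (a x₁³ + b x₁² x₂ + c x₁ x₂² + d x₂³)`, after all symmetric
functions of the roots of the cubic factor have been expressed through its coefficients. -/
lemma cubic_identity (a b c d : ℂ) :
    ((c ^ 2 - 3 * b * d) ^ 3 * (b ^ 2 - 3 * a * c) ^ 3 * (a ^ 4 * d ^ 4 * disc3 a b c d)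
      + (c ^ 2 - 3 * b * d) ^ 3 * (a ^ 2 * disc3 a b c d) * polyX a b c d
      + (b ^ 2 - 3 * a * c) ^ 3 * (d ^ 2 * disc3 a b c d) * polyX a b c d
      + (d ^ 2 * disc3 a b c d) * (a ^ 2 * disc3 a b c d) * polyY a b c d)
      / (1728 ^ 2 * 256 ^ 3) = invComb (seqN a b c d) := by
  rw [invComb, Jc_seqN, Kc_seqN]
  simp [Lc, polar2, c1, c2, c3, cubicCov, seqN, polyJ, polyK, polyX, polyY, disc3]
  ring

lemma c1_smul (t : ℂ) (a : ℕ → ℂ) : c1 (fun k => t * a k) = fun k => t ^ 2 * c1 a k := by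
  funext k
  match k with
  | 0 | 1 | _ + 2 => simp only [c1]; ring

lemma c3_smul (t : ℂ) (a : ℕ → ℂ) : c3 (fun k => t * a k) = fun k => t ^ 2 * c3 a k := by
  funext k
  match k with
  | 0 | 1 | _ + 2 => simp only [c3]; ring

lemma cubicCov_smul (t : ℂ) (a : ℕ → ℂ) :
    cubicCov (fun k => t * a k) = fun k => t ^ 3 * cubicCov a k := by
  funext k
  simp only [cubicCov, c2, c1_smul]
  ring

lemma invComb_smul (t : ℂ) (a : ℕ → ℂ) : invComb (fun k => t * a k) = t ^ 24 * invComb a := by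
  have hJ : Jc (fun k => t * a k) = t ^ 4 * Jc a := by
    simp only [Jc, polar2, c1_smul]; ring
  have hK : Kc (fun k => t * a k) = t ^ 8 * Kc a := by
    simp only [Kc, polar2, c1_smul, cubicCov_smul, c3_smul]; ring
  have hL : Lc (fun k => t * a k) = t ^ 12 * Lc a := by
    simp only [Lc, polar2, cubicCov_smul, c3_smul]; ring
  simp only [invComb, hJ, hK, hL]
  ring

/-- `12 S` for the quartic `x₁ x₂ (xv) (xw)`. -/
def edgeS (v w : Fin 2 → ℂ) : ℂ :=
  (v 0 * w 1 + w 0 * v 1) ^ 2 - 3 * (v 0 * w 0 * v 1 * w 1)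

/-- `256 (S³ - 27 T²)` for the quartic `x₁ x₂ (xv) (xw)`. -/
def edgeD (v w : Fin 2 → ℂ) : ℂ := (v 0 * w 0 * v 1 * w 1) ^ 2 * br v w ^ 2

/-- Plain coefficients of the cubic with roots `u, v, w`. -/
def cub (u v w : Fin 2 → ℂ) : ℕ → ℂ := mulLin u (mulLin v (mulLin w oneSeq))

lemma sum_X (u v w : Fin 2 → ℂ) :
    edgeS v w ^ 3 * edgeD u w * edgeD u v + edgeS u w ^ 3 * edgeD v w * edgeD u v + edgeS u v ^ 3 * edgeD v w * edgeD u w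
      = polyX (cub u v w 0) (cub u v w 1) (cub u v w 2) (cub u v w 3) := by
  simp [edgeS, edgeD, br, cub, mulLin, oneSeq, polyX]
  ring

lemma sum_Y (u v w : Fin 2 → ℂ) :
    edgeS v w ^ 3 * edgeS u w ^ 3 * edgeD u v + edgeS u w ^ 3 * edgeS u v ^ 3 * edgeD v w
        + edgeS u v ^ 3 * edgeS v w ^ 3 * edgeD u w
      = polyY (cub u v w 0) (cub u v w 1) (cub u v w 2) (cub u v w 3) := by
  simp [edgeS, edgeD, br, cub, mulLin, oneSeq, polyY]
  ring

lemma disc3_cub (u v w : Fin 2 → ℂ) :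
    disc3 (cub u v w 0) (cub u v w 1) (cub u v w 2) (cub u v w 3)
      = (br u v * br u w * br v w) ^ 2 := by
  simp [disc3, br, cub, mulLin, oneSeq]
  ring

/-- The formula for quintics having `(1,0)` and `(0,1)` among their roots, up to scaling. -/
lemma normal_case (t : ℂ) (l : Fin 5 → Fin 2 → ℂ) (h0 : l 0 = ![t, 0]) (h1 : l 1 = ![0, t]) :
    binvBr l = invComb (rootc l) := by
  set u := l 2 with hu
  set v := l 3 with hv
  set w := l 4 with hw
  set a := cub u v w 0 with ha
  set b := cub u v w 1 with hb
  set c := cub u v w 2 with hc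
  set d := cub u v w 3 with hd
  have hr : ∀ k < 6, rootc l k = -t ^ 2 * seqN a b c d k := by
    intro k hk
    interval_cases k <;>
    simp [rootc, h0, h1, ← hu, ← hv, ← hw, ha, hb, hc, hd, cub, mulLin, oneSeq, seqN,
      Nat.choose] <;>
    ring
  have hS0 : Sb l 0 = t ^ 2 * (c ^ 2 - 3 * b * d) / 12 := by
    simp [Sb, Sbr, br, h1, ← hu, ← hv, ← hw, hb, hc, hd, cub, mulLin, oneSeq]; ring
  have hS1 : Sb l 1 = t ^ 2 * (b ^ 2 - 3 * a * c) / 12 := by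
    simp [Sb, Sbr, br, h0, ← hu, ← hv, ← hw, ha, hb, hc, cub, mulLin, oneSeq]; ring
  have hS2 : Sb l 2 = t ^ 4 * edgeS v w / 12 := by
    simp [Sb, Sbr, br, h0, h1, ← hv, ← hw, edgeS]; ring
  have hS3 : Sb l 3 = t ^ 4 * edgeS u w / 12 := by
    simp [Sb, Sbr, br, h0, h1, ← hu, ← hw, edgeS]; ring
  have hS4 : Sb l 4 = t ^ 4 * edgeS u v / 12 := by
    simp [Sb, Sbr, br, h0, h1, ← hu, ← hv, edgeS]; ring
  have hΔ : disc3 a b c d = (br u v * br u w * br v w) ^ 2 := disc3_cub u v w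
  have hD0 : Db l 0 = t ^ 6 * (d ^ 2 * disc3 a b c d) / 256 := by
    rw [hΔ]
    simp [Db, Dbr, br, h1, ← hu, ← hv, ← hw, hd, cub, mulLin, oneSeq]; ring
  have hD1 : Db l 1 = t ^ 6 * (a ^ 2 * disc3 a b c d) / 256 := by
    rw [hΔ]
    simp [Db, Dbr, br, h0, ← hu, ← hv, ← hw, ha, cub, mulLin, oneSeq]; ring
  have hD2 : Db l 2 = t ^ 12 * edgeD v w / 256 := by
    simp [Db, Dbr, br, h0, h1, ← hv, ← hw, edgeD]; ring
  have hD3 : Db l 3 = t ^ 12 * edgeD u w / 256 := by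
    simp [Db, Dbr, br, h0, h1, ← hu, ← hw, edgeD]; ring
  have hD4 : Db l 4 = t ^ 12 * edgeD u v / 256 := by
    simp [Db, Dbr, br, h0, h1, ← hu, ← hv, edgeD]; ring
  have hZ : a ^ 4 * d ^ 4 * disc3 a b c d = edgeD v w * edgeD u w * edgeD u v := by
    rw [hΔ]
    simp [ha, hd, cub, mulLin, oneSeq, edgeD]; ring
  rw [invComb_congr hr, invComb_smul, ← cubic_identity, ← sum_X u v w, ← sum_Y u v w, hZ]
  simp only [binvBr, coeffThree, hS0, hS1, hS2, hS3, hS4, hD0, hD1, hD2, hD3, hD4]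
  ring

/-! ### The general case -/

/-- If the first two roots are independent, the substitution `x = y₁ λ₁ + y₂ λ₂` brings the quintic to
the shape of `normal_case`; it multiplies both sides by the 60th power of its determinant `(λ₁λ₂)`. -/
lemma binvBr_eq_of_br_ne (l : Fin 5 → Fin 2 → ℂ) (h : br (l 0) (l 1) ≠ 0) :
    binvBr l = invComb (rootc l) := by
  have key := normal_case (br (l 0) (l 1))
    (fun i => moved (l 0 0) (l 0 1) (l 1 0) (l 1 1) (l i))
    (by ext j; fin_cases j <;> simp [moved, br] <;> ring)
    (by ext j; fin_cases j <;> simp [moved, br] <;> ring)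
  rw [binvBr_moved, invComb_rootc_moved] at key
  exact mul_left_cancel₀ (pow_ne_zero 60 h) key

/-- The first root moved by `(t, 0)` and the second one by `(0, t)`; the bracket of these two is then a
monic quadratic polynomial in `t`. -/
def perturb (l : Fin 5 → Fin 2 → ℂ) (t : ℂ) : Fin 5 → Fin 2 → ℂ :=
  fun i j => l i j + if i.val = j.val then t else 0

lemma br_perturb (l : Fin 5 → Fin 2 → ℂ) (t : ℂ) :
    br (perturb l t 0) (perturb l t 1) = t ^ 2 + (l 0 0 + l 1 1) * t + br (l 0) (l 1) := by
  simp [br, perturb]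
  ring

/-- The restriction `(λ₁λ₂) ≠ 0` is removed by continuity along `perturb`. -/
lemma binvBr_eq (l : Fin 5 → Fin 2 → ℂ) : binvBr l = invComb (rootc l) := by
  have hc : ∀ i j, Continuous fun t => perturb l t i j := by
    intro i j
    unfold perturb
    split_ifs <;> fun_prop
  have hB : Continuous fun t => binvBr (perturb l t) := by
    simp [binvBr, coeffThree, Sb, Db, Sbr, Dbr, br]
    fun_prop
  have hr : ∀ k, Continuous fun t => rootc (perturb l t) k := by
    have hm : ∀ (i : Fin 5) (a : ℂ → ℕ → ℂ), (∀ k, Continuous fun t => a t k) →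
        ∀ k, Continuous fun t => mulLin (perturb l t i) (a t) k := by
      intro i a ha k
      cases k <;> simp only [mulLin] <;> fun_prop
    intro k
    refine Continuous.div_const ?_ _
    refine hm _ _ (hm _ _ (hm _ _ (hm _ _ (hm _ _ ?_)))) k
    exact fun _ => continuous_const
  have hR : Continuous fun t => invComb (rootc (perturb l t)) := by
    simp only [invComb, Jc, Kc, Lc, polar2, c3, cubicCov, c2, c1]
    fun_prop
  -- the bracket of the two perturbed roots, as a monic quadratic in `t`
  let P : Polynomial ℂ := Polynomial.X ^ 2 + Polynomial.C (l 0 0 + l 1 1) * Polynomial.X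
    + Polynomial.C (br (l 0) (l 1))
  have hP : P ≠ 0 := by
    intro h
    have := congrArg (fun p => Polynomial.coeff p 2) h
    simp [P] at this
  have hfin : {t | P.IsRoot t}.Finite := Polynomial.finite_setOfPred_isRoot hP
  have heq := Continuous.ext_on (hfin.countable.dense_compl ℂ) hB hR (by
    intro t ht
    refine binvBr_eq_of_br_ne _ ?_
    rw [br_perturb]
    intro h
    exact ht (by simpa [P] using h))
  have h0 : perturb l 0 = l := by
    funext i j
    simp [perturb]
  simpa [h0] using congrFun heq 0

/-- `B₂(F) = (5¹⁶/(2³⁰·3⁶))(2¹¹·5³·LKJ − 2⁴·5³·LJ³ − 2¹⁵·3·K³ + 2⁷·11·13·K²J²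
− 3·131·KJ⁴ + 2·J⁶)`. -/
theorem binv_two_formula (l : Fin 5 → Fin 2 → ℂ) :
    Binv l 2 = 5 ^ 16 / (2 ^ 30 * 3 ^ 6) *
      (2 ^ 11 * 5 ^ 3 * Linv (quinticOf l) * Kinv (quinticOf l) * Jinv (quinticOf l)
        - 2 ^ 4 * 5 ^ 3 * Linv (quinticOf l) * Jinv (quinticOf l) ^ 3
        - 2 ^ 15 * 3 * Kinv (quinticOf l) ^ 3
        + 2 ^ 7 * 11 * 13 * Kinv (quinticOf l) ^ 2 * Jinv (quinticOf l) ^ 2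
        - 3 * 131 * Kinv (quinticOf l) * Jinv (quinticOf l) ^ 4
        + 2 * Jinv (quinticOf l) ^ 6) := by
  rw [Binv_two, binvBr_eq, quinticOf_eq, Jinv_bform, Kinv_bform, Linv_bform, invComb]

end
end
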